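/- arXiv:2304.07439 — 3 statements merged into one kernel-verified Lean document; each statement's English description precedes it below -/
import Mathlib

section
/- The vertex operator components Q_m defined by Q(z) = exp(∑_{n≥1 odd} (2/n) p_n z^n)·exp(-∑_{n≥1 odd} ∂/∂p_n · z^{-n}) = ∑_{n∈ℤ} Q_n z^n acting on the ring Γ = ℚ[p_1, p_3, p_5, ...] satisfy the Clifford relations Q_m Q_n + Q_n Q_m = (-1)^n · 2·δ_{m,-n} for all integers m, n. -/
open MvPolynomial Finset

noncomputable section
open scoped Classical

/-- Index set of odd positive integers (odd power sums). -/
abbrev OddIdx := {n : ℕ // Odd n}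

/-- The ring Γ = F[p₁, p₃, p₅, …]. -/
abbrev Gam (F : Type) [Field F] := MvPolynomial OddIdx F

variable {F : Type} [Field F] [CharZero F]

/-- The power sum p_n (a variable for odd n, 0 otherwise). -/
def pvar (F : Type) [Field F] (n : ℕ) : Gam F := if h : Odd n then X ⟨n, h⟩ else 0

/-- p_ρ = ∏ p_{ρᵢ}. -/
def pprod (F : Type) [Field F] (ρ : Multiset ℕ) : Gam F := (ρ.map (pvar F)).prod

/-- ∂/∂p_n. -/
def pder (n : ℕ) (f : Gam F) : Gam F := if h : Odd n then pderiv (⟨n, h⟩ : OddIdx) f else 0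

/-- Composition of partial derivatives indexed by a multiset. -/
def Dmult (ρ : Multiset ℕ) (f : Gam F) : Gam F := ρ.toList.foldr pder f

/-- ∏ᵢ mᵢ(ρ)!. -/
def aut (ρ : Multiset ℕ) : ℕ := ρ.toFinset.prod fun i => Nat.factorial (ρ.count i)

/-- z_ρ = ∏ᵢ i^{mᵢ(ρ)} mᵢ(ρ)!. -/
def zp (ρ : Multiset ℕ) : ℕ := ρ.prod * aut ρ

/-- Coefficient of z^m in exp(∑ₙ c_n p_n zⁿ). -/
def crea (c : ℕ → F) (m : ℤ) : Gam F :=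
  if 0 ≤ m then
    ∑ ρ : Nat.Partition m.toNat, (((ρ.parts.map c).prod) / (aut ρ.parts : F)) • pprod F ρ.parts
  else 0

/-- Coefficient of z^{-k} in exp(∑ₙ d_n (∂/∂p_n) z^{-n}), applied to f. -/
def annih (d : ℕ → F) (k : ℕ) (f : Gam F) : Gam F :=
  ∑ ρ : Nat.Partition k, (((ρ.parts.map d).prod) / (aut ρ.parts : F)) • Dmult ρ.parts f

/-- A bound beyond which all annihilation components kill f. -/
def bnd (f : Gam F) : ℕ := (f.totalDegree + 1) * ((f.vars.sup fun v => v.1) + 1) + 1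

/-- Coefficient of z^m in exp(∑ c_n p_n zⁿ)·exp(∑ d_n ∂/∂p_n z^{-n}), applied to f. -/
def vop (c d : ℕ → F) (m : ℤ) (f : Gam F) : Gam F :=
  ∑ k ∈ Finset.range (bnd f), crea c (m + k) * annih d k f

/-- c_n = 2/n for odd n: the creation coefficients for Schur's Q-functions. -/
def cQ (F : Type) [Field F] : ℕ → F := fun n => if Odd n then 2 / (n : F) else 0

/-- d_n = -1 for odd n: annihilation coefficients of Q(z). -/
def dQ (F : Type) [Field F] : ℕ → F := fun n => if Odd n then (-1 : F) else 0

/-- The component Q_m of the vertex operator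
  Q(z) = exp(∑_{n odd} (2/n) pₙ zⁿ) exp(-∑_{n odd} (∂/∂pₙ) z^{-n}). -/
def Qop (m : ℤ) (f : Gam F) : Gam F := vop (cQ F) (dQ F) m f

/-- The one-row Schur Q-function q_m (with q_m = 0 for m < 0, q₀ = 1). -/
def qel (F : Type) [Field F] [CharZero F] (m : ℤ) : Gam F := crea (cQ F) m

/-- Q_λ·1 = Q_{λ₁}⋯Q_{λ_l}·1. -/
def Qelem (F : Type) [Field F] [CharZero F] (l : List ℕ) : Gam F :=
  l.foldr (fun a g => Qop (a : ℤ) g) 1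

/-- The bilinear form on Γ with ⟨p_λ, p_μ⟩ = 2^{-ℓ(λ)} δ_{λμ} z_λ. -/
def formQ (f g : Gam F) : F :=
  ∑ m ∈ f.support, f.coeff m * g.coeff m *
    ((m.prod fun i k => (i.1 : F) ^ k * (Nat.factorial k : F)) / 2 ^ (m.sum fun _ k => k))

end


noncomputable section
open scoped Classical

namespace Cl

def PS (k : ℕ) : Finset (Multiset ℕ) := (univ : Finset (Nat.Partition k)).image (fun ρ => ρ.parts)

lemma mem_PS {k : ℕ} {s : Multiset ℕ} : s ∈ PS k ↔ (∀ i ∈ s, 0 < i) ∧ s.sum = k := by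
  simp only [PS, Finset.mem_image, Finset.mem_univ, true_and]
  constructor
  · rintro ⟨ρ, rfl⟩
    exact ⟨fun i hi => ρ.parts_pos hi, ρ.parts_sum⟩
  · rintro ⟨h1, h2⟩
    exact ⟨⟨s, fun {i} hi => h1 i hi, h2⟩, rfl⟩

lemma sum_PS {M : Type*} [AddCommMonoid M] (k : ℕ) (G : Multiset ℕ → M) :
    ∑ ρ : Nat.Partition k, G ρ.parts = ∑ s ∈ PS k, G s := by
  rw [PS, Finset.sum_image]
  intro a _ b _ h
  exact Nat.Partition.ext h

lemma aut_cons (n : ℕ) (s : Multiset ℕ) : aut (n ::ₘ s) = (s.count n + 1) * aut s := by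
  unfold aut
  have h1 : ∀ t : Multiset ℕ, ∀ u : Finset ℕ, t.toFinset ⊆ u →
      (t.toFinset.prod fun i => Nat.factorial (t.count i)) = u.prod fun i => Nat.factorial (t.count i) := by
    intro t u h
    apply Finset.prod_subset h
    intro x _ hx
    rw [Multiset.mem_toFinset] at hx
    simp [Multiset.count_eq_zero_of_notMem hx]
  rw [h1 s (n ::ₘ s).toFinset (by intro x hx; simp at hx ⊢; exact Or.inr hx)]
  have hn : n ∈ (n ::ₘ s).toFinset := by simp
  rw [← Finset.mul_prod_erase _ _ hn, ← Finset.mul_prod_erase _ (fun i => Nat.factorial (s.count i)) hn]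
  rw [Multiset.count_cons_self, Nat.factorial_succ, mul_assoc]
  congr 2
  apply Finset.prod_congr rfl
  intro x hx
  rw [Multiset.count_cons_of_ne (Finset.ne_of_mem_erase hx)]

lemma aut_ne (s : Multiset ℕ) : (aut s : ℚ) ≠ 0 := by
  unfold aut
  exact_mod_cast Finset.prod_ne_zero_iff.2 fun i _ => Nat.factorial_ne_zero _

lemma part_rec {M : Type*} [AddCommGroup M] [Module ℚ M] (g : Multiset ℕ → M) (k : ℕ) :
    (k : ℚ) • ∑ s ∈ PS k, (1 / (aut s : ℚ)) • g s
      = ∑ n ∈ Finset.range (k+1), (n : ℚ) • ∑ s ∈ PS (k - n), (1 / (aut s : ℚ)) • g (n ::ₘ s) := by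
  have hR : ∑ n ∈ Finset.range (k+1), (n : ℚ) • ∑ s ∈ PS (k - n), (1 / (aut s : ℚ)) • g (n ::ₘ s)
     = ∑ n ∈ Finset.Icc 1 k, ∑ s ∈ PS (k - n), (n : ℚ) • (1 / (aut s : ℚ)) • g (n ::ₘ s) := by
    simp_rw [← Finset.smul_sum]
    symm
    apply Finset.sum_subset
    · intro x hx; simp at hx ⊢; omega
    · intro x hx hx'
      have : x = 0 := by simp at hx hx'; omega
      subst this; simp
  have hL : (k : ℚ) • ∑ s ∈ PS k, (1 / (aut s : ℚ)) • g s
      = ∑ s ∈ PS k, ∑ n ∈ s.toFinset, ((s.count n * n : ℚ)) • (1 / (aut s : ℚ)) • g s := by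
    rw [Finset.smul_sum]
    apply Finset.sum_congr rfl
    intro s hs
    rw [← Finset.sum_smul]
    congr 1
    rw [← (mem_PS.1 hs).2, Finset.sum_multiset_count]
    push_cast
    simp
  rw [hL, hR, Finset.sum_sigma', Finset.sum_sigma']
  apply Finset.sum_bij' (i := fun x _ => (⟨x.2, x.1.erase x.2⟩ : Σ _ : ℕ, Multiset ℕ))
    (j := fun x _ => (⟨x.1 ::ₘ x.2, x.1⟩ : Σ _ : Multiset ℕ, ℕ))
  · rintro ⟨s, n⟩ h
    simp only [Finset.mem_sigma, mem_PS, Multiset.mem_toFinset, Finset.mem_Icc] at h ⊢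
    obtain ⟨⟨h1, h2⟩, h3⟩ := h
    have h4 := Multiset.sum_erase h3
    have := h1 n h3
    refine ⟨⟨this, by omega⟩, fun i hi => h1 i (Multiset.mem_of_mem_erase hi), by omega⟩
  · rintro ⟨n, s⟩ h
    simp only [Finset.mem_sigma, mem_PS, Multiset.mem_toFinset, Finset.mem_Icc] at h ⊢
    obtain ⟨⟨h1, h2⟩, h3, h4⟩ := h
    refine ⟨⟨?_, by rw [Multiset.sum_cons]; omega⟩, by simp⟩
    intro i hi
    rcases Multiset.mem_cons.1 hi with rfl | hi
    · omega
    · exact h3 i hi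
  · rintro ⟨s, n⟩ h
    simp only [Finset.mem_sigma, Multiset.mem_toFinset] at h
    simp [Multiset.cons_erase h.2]
  · rintro ⟨n, s⟩ h
    simp
  · rintro ⟨s, n⟩ h
    simp only [Finset.mem_sigma, Multiset.mem_toFinset] at h
    obtain ⟨t, rfl⟩ := Multiset.exists_cons_of_mem h.2
    simp only [Multiset.erase_cons_head, smul_smul]
    congr 1
    have := aut_ne t
    rw [aut_cons, Multiset.count_cons_self]
    push_cast
    have : ((Multiset.count n t : ℚ) + 1) ≠ 0 := by positivity
    field_simp

/-- creation components -/
abbrev q (r : ℤ) : Gam ℚ := crea (cQ ℚ) r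
abbrev D (k : ℕ) (f : Gam ℚ) : Gam ℚ := annih (dQ ℚ) k f

lemma q_neg {r : ℤ} (h : r < 0) : q r = 0 := by
  simp [q, crea, not_le.2 h]

lemma q_nat (k : ℕ) : q k = ∑ s ∈ PS k, (1 / (aut s : ℚ)) • ((s.map (cQ ℚ)).prod • pprod ℚ s) := by
  rw [← sum_PS, q, crea, if_pos (by omega)]
  simp only [Int.toNat_natCast, smul_smul]
  apply Finset.sum_congr rfl
  intro s _
  congr 1
  ring

lemma D_eq (k : ℕ) (f : Gam ℚ) :
    D k f = ∑ s ∈ PS k, (1 / (aut s : ℚ)) • ((s.map (dQ ℚ)).prod • Dmult s f) := by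
  rw [← sum_PS, D, annih]
  simp only [smul_smul]
  apply Finset.sum_congr rfl
  intro s _
  congr 1
  ring

lemma PS_zero : PS 0 = {0} := by
  ext s
  rw [mem_PS, Finset.mem_singleton]
  constructor
  · rintro ⟨h1, h2⟩
    apply Multiset.eq_zero_of_forall_notMem
    intro a ha
    have := h1 a ha
    have := Multiset.le_sum_of_mem ha
    omega
  · rintro rfl; simp

lemma q_zero : q 0 = 1 := by
  have := q_nat 0
  simpa [PS_zero, aut, pprod] using this

lemma D_zero (f : Gam ℚ) : D 0 f = f := by
  rw [D_eq]
  simp [PS_zero, aut, Dmult]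

lemma q_rec_nat (k : ℕ) : (k : ℚ) • q k = ∑ n ∈ Finset.range (k+1), 2 * pvar ℚ n * q ((k : ℤ) - n) := by
  rw [q_nat, part_rec]
  apply Finset.sum_congr rfl
  intro n hn
  have hn : n ≤ k := by simp at hn; omega
  rw [show ((k:ℤ) - n) = ((k - n : ℕ) : ℤ) by omega, q_nat]
  rw [Finset.smul_sum, Finset.mul_sum]
  apply Finset.sum_congr rfl
  intro s _
  simp only [pprod, Multiset.map_cons, Multiset.prod_cons, MvPolynomial.smul_eq_C_mul]
  by_cases h : Odd n
  · have h0 : (n : ℚ) ≠ 0 := by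
      have := h.pos
      positivity
    have : (C (n:ℚ) : Gam ℚ) * C (cQ ℚ n) = 2 := by
      rw [cQ, if_pos h, ← C_mul, mul_div_cancel₀ _ h0]; rfl
    simp only [C_mul]
    linear_combination (C (1 / (aut s : ℚ)) * C (Multiset.map (cQ ℚ) s).prod * pvar ℚ n * (Multiset.map (pvar ℚ) s).prod) * this
  · simp [h, cQ, pvar]

lemma q_rec (r : ℤ) (N : ℕ) (h : r < N) :
    (r : ℚ) • q r = ∑ n ∈ Finset.range N, 2 * pvar ℚ n * q (r - n) := by
  rcases lt_or_ge r 0 with h0 | h0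
  · rw [q_neg h0, Finset.sum_eq_zero, smul_zero]
    intro n _
    rw [q_neg (by omega), mul_zero]
  · lift r to ℕ using h0
    rw [show ((r : ℤ) : ℚ) = (r : ℚ) by simp, q_rec_nat]
    apply Finset.sum_subset
    · intro x hx; simp at hx ⊢; omega
    · intro x _ hx
      rw [q_neg (by simp at hx; omega), mul_zero]

lemma pder_comm (a b : ℕ) (f : Gam ℚ) : pder a (pder b f) = pder b (pder a f) := by
  unfold pder
  split_ifs
  · induction f using MvPolynomial.induction_on with
    | C a => simp
    | add p q hp hq => simp [hp, hq]
    | mul_X p i hp =>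
      simp only [pderiv_mul, map_add, hp, pderiv_X]
      simp only [Pi.single_apply]
      split_ifs <;> simp [add_comm, add_left_comm]
  all_goals simp

lemma Dmult_cons (n : ℕ) (s : Multiset ℕ) (f : Gam ℚ) : Dmult (n ::ₘ s) f = Dmult s (pder n f) := by
  unfold Dmult
  have : LeftCommutative (pder : ℕ → Gam ℚ → Gam ℚ) := ⟨pder_comm⟩
  have h : (n ::ₘ s).toList.Perm (s.toList ++ [n]) := by
    rw [← Multiset.coe_eq_coe]
    simp [← Multiset.coe_add]
    rw [add_comm, Multiset.singleton_add]
  rw [h.foldr_eq]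
  simp

lemma D_rec (k N : ℕ) (h : k < N) (f : Gam ℚ) :
    (k : ℚ) • D k f = ∑ n ∈ Finset.range N, if n ≤ k then -((n : ℚ) • D (k - n) (pder n f)) else 0 := by
  rw [D_eq, part_rec, ← Finset.sum_filter]
  apply Finset.sum_congr
  · ext x; simp; omega
  intro n hn
  rw [D_eq]
  rw [← smul_neg, ← Finset.sum_neg_distrib]
  congr 1
  apply Finset.sum_congr rfl
  intro s _
  rw [Dmult_cons, Multiset.map_cons, Multiset.prod_cons, ← smul_neg]
  congr 1
  by_cases hn : Odd n
  · simp [dQ, hn]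
  · simp only [dQ, hn, if_false, zero_mul, zero_smul, pder, dif_neg, not_false_eq_true]
    have : ∀ s : Multiset ℕ, Dmult s (0 : Gam ℚ) = 0 := by
      intro s
      induction s using Multiset.induction_on with
      | empty => simp [Dmult]
      | cons a s ih => rw [Dmult_cons]; simpa [pder] using ih
    simp [this]

lemma pder_add (n : ℕ) (f g : Gam ℚ) : pder n (f + g) = pder n f + pder n g := by
  unfold pder; split_ifs <;> simp

lemma pder_smul (n : ℕ) (c : ℚ) (f : Gam ℚ) : pder n (c • f) = c • pder n f := by
  unfold pder; split_ifs <;> simp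

lemma pder_sum {ι : Type*} (n : ℕ) (s : Finset ι) (f : ι → Gam ℚ) :
    pder n (∑ i ∈ s, f i) = ∑ i ∈ s, pder n (f i) := by
  unfold pder; split_ifs <;> simp

lemma pder_mul (n : ℕ) (f g : Gam ℚ) : pder n (f * g) = pder n f * g + f * pder n g := by
  unfold pder; split_ifs
  · rw [pderiv_mul]
  · simp

lemma pder_C (n : ℕ) (a : ℚ) : pder n (C a : Gam ℚ) = 0 := by
  unfold pder; split_ifs <;> simp

lemma pder_X (n : ℕ) (i : OddIdx) : pder n (X i : Gam ℚ) = if n = i.1 then 1 else 0 := by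
  unfold pder
  split_ifs with h1 h2 h2
  · subst h2; simp
  · rw [pderiv_X_of_ne]
    rintro rfl; exact h2 rfl
  · exact absurd (h2 ▸ i.2) h1
  · rfl

def T : Gam ℚ →ₐ[ℚ] Polynomial (Gam ℚ) :=
  MvPolynomial.aeval fun i : OddIdx => Polynomial.C (X i) - Polynomial.X ^ i.1

lemma T_X (i : OddIdx) : T (X i) = Polynomial.C (X i) - Polynomial.X ^ i.1 := by
  simp [T]

lemma T_C (a : ℚ) : T (C a) = Polynomial.C (C a) := by
  rw [← MvPolynomial.algebraMap_eq, AlgHom.commutes]; rfl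

lemma T_coeff_zero (f : Gam ℚ) : (T f).coeff 0 = f := by
  induction f using MvPolynomial.induction_on with
  | C a => simp [T_C]
  | add p q hp hq => simp [hp, hq]
  | mul_X p i hp =>
    have := i.2.pos
    rw [map_mul, Polynomial.mul_coeff_zero, hp, T_X]
    simp [Polynomial.coeff_X_pow, this.ne]

def E (N : ℕ) (f : Gam ℚ) : Polynomial (Gam ℚ) :=
  Polynomial.X * Polynomial.derivative (T f)
    + ∑ n ∈ Finset.range N, (n : Polynomial (Gam ℚ)) * Polynomial.X ^ n * T (pder n f)

lemma E_dvd (N : ℕ) (f : Gam ℚ) : Polynomial.X ^ N ∣ E N f := by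
  induction f using MvPolynomial.induction_on with
  | C a => simp [E, T_C, pder_C]
  | add p q hp hq =>
    have : E N (p + q) = E N p + E N q := by
      simp only [E, map_add, pder_add, mul_add, Finset.sum_add_distrib]; ring
    rw [this]; exact dvd_add hp hq
  | mul_X p i hp =>
    have h : E N (p * X i) = E N p * T (X i) + T p * E N (X i) := by
      simp only [E, map_add, map_mul, pder_mul, mul_add, add_mul, Finset.sum_add_distrib,
        Polynomial.derivative_mul, Finset.sum_mul, Finset.mul_sum]
      have e1 : ∀ n : ℕ, (n : Polynomial (Gam ℚ)) * Polynomial.X ^ n * (T p * T (pder n (X i)))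
          = T p * ((n : Polynomial (Gam ℚ)) * Polynomial.X ^ n * T (pder n (X i))) := by
        intro n; ring
      simp only [e1, mul_assoc]
      ring
    rw [h]
    refine dvd_add (hp.mul_right _) (Dvd.dvd.mul_left ?_ _)
    have h2 : E N (X i) = -((i.1 : Polynomial (Gam ℚ)) * Polynomial.X ^ i.1)
        + if i.1 < N then (i.1 : Polynomial (Gam ℚ)) * Polynomial.X ^ i.1 else 0 := by
      unfold E
      congr 1
      · obtain ⟨k, hk⟩ : ∃ k, i.1 = k + 1 := ⟨i.1 - 1, by have := i.2.pos; omega⟩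
        rw [T_X, hk]
        simp
        ring
      · simp only [pder_X]
        have := Finset.sum_ite_eq' (Finset.range N) i.1 (fun n => (n : Polynomial (Gam ℚ)) * Polynomial.X ^ n)
        simp only [Finset.mem_range] at this
        rw [← this]
        apply Finset.sum_congr rfl
        intro n _
        split_ifs <;> simp
    rw [h2]
    split_ifs with h3
    · simp
    · rw [add_zero]
      exact (Dvd.dvd.mul_left (pow_dvd_pow _ (by omega)) _).neg_right

lemma T_rec (k N : ℕ) (h : k < N) (f : Gam ℚ) :
    (k : ℚ) • (T f).coeff k
      = ∑ n ∈ Finset.range N, if n ≤ k then -((n : ℚ) • (T (pder n f)).coeff (k - n)) else 0 := by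
  have h1 : (E N f).coeff k = 0 := Polynomial.X_pow_dvd_iff.1 (E_dvd N f) k h
  have h2 : (Polynomial.X * Polynomial.derivative (T f)).coeff k = (k : ℚ) • (T f).coeff k := by
    cases k with
    | zero => simp
    | succ k =>
      rw [Polynomial.coeff_X_mul, Polynomial.coeff_derivative, MvPolynomial.smul_eq_C_mul]
      simp [mul_comm]
  rw [E, Polynomial.coeff_add, h2, Polynomial.finsetSum_coeff] at h1
  rw [eq_neg_of_add_eq_zero_left h1, ← Finset.sum_neg_distrib]
  apply Finset.sum_congr rfl
  intro n _
  rw [mul_assoc, ← Polynomial.C_eq_natCast, Polynomial.coeff_C_mul, Polynomial.coeff_X_pow_mul',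
    MvPolynomial.smul_eq_C_mul]
  split_ifs <;> simp

lemma D_T (k : ℕ) : ∀ f : Gam ℚ, D k f = (T f).coeff k := by
  induction k using Nat.strong_induction_on with
  | _ k ih =>
    intro f
    rcases Nat.eq_zero_or_pos k with rfl | hk
    · rw [D_zero, T_coeff_zero]
    · have h : (k : ℚ) • D k f = (k : ℚ) • (T f).coeff k := by
        rw [D_rec k (k+1) (by omega), T_rec k (k+1) (by omega)]
        apply Finset.sum_congr rfl
        intro n _
        rcases Nat.eq_zero_or_pos n with rfl | hn
        · simp
        · split_ifs with h
          · rw [ih (k - n) (by omega)]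
          · rfl
      exact smul_right_injective _ (by positivity : (k : ℚ) ≠ 0) h

lemma D_mul (k : ℕ) (f g : Gam ℚ) :
    D k (f * g) = ∑ x ∈ antidiagonal k, D x.1 f * D x.2 g := by
  simp only [D_T, map_mul, Polynomial.coeff_mul]

lemma D_sum {ι : Type*} (k : ℕ) (s : Finset ι) (f : ι → Gam ℚ) :
    D k (∑ i ∈ s, f i) = ∑ i ∈ s, D k (f i) := by
  simp only [D_T, map_sum, Polynomial.finsetSum_coeff]

lemma D_smul (k : ℕ) (c : ℚ) (f : Gam ℚ) : D k (c • f) = c • D k f := by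
  simp only [D_T, map_smul, Polynomial.coeff_smul]

lemma T_natDegree (f : Gam ℚ) : (T f).natDegree ≤ f.totalDegree * (f.vars.sup fun v => v.1) := by
  rw [T, MvPolynomial.aeval_def, MvPolynomial.eval₂_eq]
  apply Polynomial.natDegree_sum_le_of_forall_le
  intro d hd
  refine (Polynomial.natDegree_C_mul_le _ _).trans ?_
  refine (Polynomial.natDegree_prod_le _ _).trans ?_
  calc ∑ i ∈ d.support, ((Polynomial.C (X i : Gam ℚ) - Polynomial.X ^ i.1) ^ d i).natDegree
      ≤ ∑ i ∈ d.support, d i * (f.vars.sup fun v => v.1) := by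
        apply Finset.sum_le_sum
        intro i hi
        refine Polynomial.natDegree_pow_le.trans (Nat.mul_le_mul_left _ ?_)
        refine le_trans ?_ (Finset.le_sup (f := fun v : OddIdx => v.1) ((MvPolynomial.mem_vars_iff_mem_support i).2 ⟨d, hd, hi⟩))
        refine (Polynomial.natDegree_sub_le _ _).trans ?_
        simp
    _ ≤ _ := by
        rw [← Finset.sum_mul]
        exact Nat.mul_le_mul_right _ (MvPolynomial.le_totalDegree hd)

lemma D_bnd {k : ℕ} {f : Gam ℚ} (h : bnd f ≤ k) : D k f = 0 := by
  rw [D_T]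
  apply Polynomial.coeff_eq_zero_of_natDegree_lt
  refine (T_natDegree f).trans_lt (lt_of_lt_of_le ?_ h)
  unfold bnd
  nlinarith

lemma Q_eq (m : ℤ) (f : Gam ℚ) (N : ℕ) (h : bnd f ≤ N) :
    Qop m f = ∑ k ∈ Finset.range N, q (m + k) * D k f := by
  rw [Qop, vop]
  apply Finset.sum_subset
  · intro x hx; simp at hx ⊢; omega
  · intro x _ hx
    change _ * D x f = 0
    rw [D_bnd (by simpa using hx), mul_zero]

lemma D_pder (k n : ℕ) (f : Gam ℚ) : D k (pder n f) = pder n (D k f) := by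
  simp only [D_eq, pder_sum, pder_smul]
  apply Finset.sum_congr rfl
  intro s _
  congr 2
  clear * -
  induction s using Multiset.induction_on generalizing f with
  | empty => simp [Dmult]
  | cons a s ih => rw [Dmult_cons, Dmult_cons, pder_comm, ih]

lemma D_comm (j l : ℕ) (f : Gam ℚ) : D j (D l f) = D l (D j f) := by
  rw [D_eq j (D l f), D_eq j f, D_sum]
  apply Finset.sum_congr rfl
  intro s _
  rw [D_smul, D_smul]
  congr 2
  clear * -
  induction s using Multiset.induction_on generalizing f with
  | empty => simp [Dmult]
  | cons a s ih => rw [Dmult_cons, Dmult_cons, ← D_pder, ih]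

def V : Polynomial (Gam ℚ) →+* Polynomial (Gam ℚ) :=
  Polynomial.eval₂RingHom (T : Gam ℚ →+* Polynomial (Gam ℚ)) (-Polynomial.X)

lemma V_T (f : Gam ℚ) : V (T f) = Polynomial.C f := by
  induction f using MvPolynomial.induction_on with
  | C a => simp [V, T_C]
  | add p q hp hq => simp [hp, hq]
  | mul_X p i hp =>
    rw [map_mul, map_mul, hp, T_X]
    congr 1
    have : (-Polynomial.X : Polynomial (Gam ℚ)) ^ i.1 = - Polynomial.X ^ i.1 :=
      Odd.neg_pow (α := Polynomial (Gam ℚ)) i.2 _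
    simp [V, T_X, this]

lemma D_inv (K : ℕ) (f : Gam ℚ) :
    ∑ x ∈ antidiagonal K, (-1 : ℚ) ^ x.2 • D x.1 (D x.2 f) = if K = 0 then f else 0 := by
  have h : (V (T f)).coeff K = if K = 0 then f else 0 := by
    rw [V_T, Polynomial.coeff_C]
  rw [← h, V, Polynomial.coe_eval₂RingHom,
    Polynomial.eval₂_eq_sum_range' _ (n := (T f).natDegree + 1 + (K+1)) (by omega), Polynomial.finsetSum_coeff,
    Finset.Nat.sum_antidiagonal_eq_sum_range_succ_mk, ← Finset.sum_range_reflect]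
  have : ∀ l ∈ Finset.range ((T f).natDegree + 1 + (K+1)), 
      ((T : Gam ℚ →+* Polynomial (Gam ℚ)) ((T f).coeff l) * (-Polynomial.X) ^ l).coeff K
      = if l ≤ K then (-1 : ℚ) ^ l • D (K - l) (D l f) else 0 := by
    intro l _
    rw [neg_pow (Polynomial.X : Polynomial (Gam ℚ)) l, ← mul_assoc, Polynomial.coeff_mul_X_pow']
    split_ifs
    · rw [show ((-1 : Polynomial (Gam ℚ)) ^ l) = Polynomial.C (C ((-1 : ℚ)^l)) by simp,
        Polynomial.coeff_mul_C, D_T (K - l), D_T l, MvPolynomial.smul_eq_C_mul, mul_comm]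
      rfl
    · rfl
  rw [Finset.sum_congr rfl this, ← Finset.sum_filter]
  apply Finset.sum_congr
  · ext x; simp; omega
  · intro x hx
    have : x ≤ K := by simp at hx; omega
    simp only [Nat.succ_eq_add_one, show K + 1 - 1 - x = K - x by omega, show K - (K - x) = x by omega]

lemma pder_q (n : ℕ) (hn : Odd n) (r : ℤ) : pder n (q r) = (2 / (n : ℚ)) • q (r - n) := by
  have hn0 : (n : ℚ) ≠ 0 := by
    have := hn.pos
    positivity
  have hnp := hn.pos
  have key : ∀ k : ℕ, ∀ r : ℤ, r < k → pder n (q r) = (2 / (n : ℚ)) • q (r - n) := by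
    intro k
    induction k with
    | zero =>
      intro r hr
      rw [q_neg (by simpa using hr), q_neg (by push_cast at hr; omega)]
      have := pder_C n 0
      simpa using this
    | succ k ih =>
      intro r hr
      rcases lt_trichotomy r 0 with h0 | h0 | h0
      · rw [q_neg h0, q_neg (by omega)]
        have := pder_C n 0
        simpa using this
      · subst h0
        rw [q_zero, q_neg (by omega)]
        have := pder_C n 1
        simpa using this
      · have hr0 : (r : ℚ) ≠ 0 := by
          have : r ≠ 0 := by omega
          exact_mod_cast this
        apply smul_right_injective _ hr0
        change (r : ℚ) • pder n (q r) = (r : ℚ) • ((2 / (n : ℚ)) • q (r - n))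
        set N := (r.toNat + n + 1) with hN
        have e1 := q_rec r N (by omega)
        have e2 := q_rec (r - n) N (by omega)
        rw [← pder_smul, e1, pder_sum]
        have e3 : ∀ m ∈ Finset.range N, pder n (2 * pvar ℚ m * q (r - m))
            = (if m = n then 2 * q (r - n) else 0) + (2 / (n:ℚ)) • (2 * pvar ℚ m * q (r - n - m)) := by
          intro m _
          have e4 : pder n (2 * pvar ℚ m) = if m = n then 2 else 0 := by
            have h2 : (2 : Gam ℚ) = C 2 := rfl
            rw [h2, pder_mul, pder_C, zero_mul, zero_add]
            by_cases hm : Odd m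
            · rw [pvar, dif_pos hm, pder_X]
              simp only [eq_comm (a := n)]
              split_ifs <;> simp
            · have : m ≠ n := by rintro rfl; exact hm hn
              rw [pvar, dif_neg hm, if_neg this]
              have := pder_C n 0
              simp at this
              simp [this]
          rw [pder_mul, e4]
          congr 1
          · split_ifs with h
            · rw [h]
            · simp
          · by_cases hm : Odd m
            · have := hm.pos
              rw [ih (r - m) (by push_cast at hr; omega), mul_smul_comm, show r - m - n = r - n - m by ring]
            · simp [pvar, hm]
        rw [Finset.sum_congr rfl e3, Finset.sum_add_distrib, ← Finset.smul_sum, ← e2,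
          Finset.sum_ite_eq', if_pos (by simp [hN])]
        rw [show (2 : Gam ℚ) * q (r - n) = (2 : ℚ) • q (r - n) by
          rw [MvPolynomial.smul_eq_C_mul]; rfl]
        rw [smul_smul, smul_smul, ← add_smul]
        congr 1
        push_cast
        field_simp
        ring
  exact key (r.toNat + 1) r (by omega)

def a (i : ℕ) : ℚ := if i = 0 then 1 else 2 * (-1) ^ i

lemma a_rec (k : ℕ) : (k : ℚ) * a k = -∑ n ∈ Finset.range (k+1), if Odd n then 2 * a (k - n) else 0 := by
  induction k using Nat.twoStepInduction with
  | zero => simp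
  | one => simp [Finset.sum_range_succ, a]
  | more k ih _ =>
    have h : ∑ n ∈ Finset.range (k+2+1), (if Odd n then 2 * a (k + 2 - n) else 0)
        = (∑ n ∈ Finset.range (k+1), if Odd n then 2 * a (k - n) else 0) + 2 * a (k + 1) := by
      rw [Finset.sum_range_succ', Finset.sum_range_succ']
      simp only [Nat.odd_add_one, not_not, Nat.not_odd_zero]
      simp
    rw [h, neg_add, ← ih]
    simp only [a]
    rcases Nat.eq_zero_or_pos k with rfl | hk
    · norm_num
    · rw [if_neg (by omega), if_neg (by omega), if_neg (by omega)]
      push_cast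
      ring

lemma D_q (i : ℕ) : ∀ r : ℤ, D i (q r) = a i • q (r - i) := by
  induction i using Nat.strong_induction_on with
  | _ i ih =>
    intro r
    rcases Nat.eq_zero_or_pos i with rfl | hi
    · rw [D_zero]; simp [a]
    · apply smul_right_injective _ (by positivity : (i : ℚ) ≠ 0)
      change (i : ℚ) • D i (q r) = (i : ℚ) • (a i • q (r - i))
      rw [D_rec i (i+1) (by omega), smul_smul, a_rec, ← Finset.sum_neg_distrib, Finset.sum_smul]
      apply Finset.sum_congr rfl
      intro n hn
      have hn : n ≤ i := by simp at hn; omega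
      rw [if_pos hn]
      by_cases h : Odd n
      · have := h.pos
        rw [pder_q n h, D_smul, ih (i - n) (by omega), if_pos h, smul_smul, smul_smul, neg_smul]
        have hn0 : (n : ℚ) ≠ 0 := by positivity
        congr 2
        · field_simp
        · congr 1; omega
      · rw [if_neg h, pder, dif_neg h, D_T]
        simp

lemma q_inv (K : ℕ) : ∑ x ∈ antidiagonal K, (-1 : ℚ) ^ x.2 • (q x.1 * q x.2) = if K = 0 then 1 else 0 := by
  set A : PowerSeries (Gam ℚ) := PowerSeries.mk fun k => q k with hA
  set B : PowerSeries (Gam ℚ) := PowerSeries.mk fun k => (-1 : Gam ℚ) ^ k * q k with hB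
  set P : PowerSeries (Gam ℚ) := PowerSeries.mk fun k => 2 * pvar ℚ (k+1) with hP
  have hrec : ∀ k : ℕ, q ((k + 1 : ℕ) : ℤ) * ((k : Gam ℚ) + 1)
      = ∑ n ∈ Finset.range (k+1), 2 * pvar ℚ (n+1) * q ((k - n : ℕ) : ℤ) := by
    intro k
    have := q_rec_nat (k+1)
    rw [Finset.sum_range_succ'] at this
    have h0 : pvar ℚ 0 = 0 := by simp [pvar]
    rw [h0, mul_zero, zero_mul, add_zero, MvPolynomial.smul_eq_C_mul, mul_comm] at this
    convert this using 1
    · simp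
    · apply Finset.sum_congr rfl
      intro n hn
      congr 2
      simp at hn
      omega
  have dA : PowerSeries.derivative (Gam ℚ) A = P * A := by
    ext1 k
    rw [PowerSeries.coeff_derivative, PowerSeries.coeff_mul, Finset.Nat.sum_antidiagonal_eq_sum_range_succ_mk]
    simp only [hA, hP, PowerSeries.coeff_mk]
    exact hrec k
  have dB : PowerSeries.derivative (Gam ℚ) B = -(P * B) := by
    ext1 k
    rw [PowerSeries.coeff_derivative, map_neg, PowerSeries.coeff_mul, Finset.Nat.sum_antidiagonal_eq_sum_range_succ_mk]
    simp only [hB, hP, PowerSeries.coeff_mk]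
    rw [mul_assoc, hrec k, Finset.mul_sum, ← Finset.sum_neg_distrib]
    apply Finset.sum_congr rfl
    intro n hn
    have hn : n ≤ k := by simp at hn; omega
    by_cases h : Odd (n+1)
    · obtain ⟨t, rfl⟩ := Nat.exists_eq_add_of_le hn
      have : (-1 : Gam ℚ) ^ n = 1 := by
        apply Even.neg_one_pow
        rcases Nat.even_or_odd n with h' | h'
        · exact h'
        · exact absurd h (by simp [Nat.odd_add_one, h'])
      rw [Nat.add_sub_cancel_left, pow_succ, pow_add, this]
      ring
    · simp [pvar, h]
  have h1 : A * B = 1 := by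
    apply PowerSeries.derivative.ext
    · rw [Derivation.leibniz, dA, dB]
      simp
      ring
    · simp [hA, hB, ← PowerSeries.coeff_zero_eq_constantCoeff_apply, PowerSeries.coeff_mk, -PowerSeries.coeff_zero_eq_constantCoeff]
      have := q_zero
      simp [q] at this
      simp [this]
  have h2 := congrArg (PowerSeries.coeff K) h1
  rw [PowerSeries.coeff_mul, PowerSeries.coeff_one] at h2
  rw [← h2]
  apply Finset.sum_congr rfl
  intro x _
  simp only [hA, hB, PowerSeries.coeff_mk, MvPolynomial.smul_eq_C_mul]
  simp
  ring

lemma S_symm (A B : ℤ) (I : ℕ) :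
    (∑ i ∈ Finset.range (I+1), a i • (q (A + i) * q (B - i)))
      + (∑ i ∈ Finset.range (I+1), a i • (q (B + i) * q (A - i)))
    = (2 : ℚ) • ∑ i ∈ Finset.Icc (-(I : ℤ)) I, (-1 : ℚ) ^ i • (q (A + i) * q (B - i)) := by
  induction I with
  | zero =>
    simp only [zero_add, Finset.sum_range_one, Nat.cast_zero, neg_zero, Finset.Icc_self, Finset.sum_singleton]
    simp only [a, if_true, add_zero, sub_zero, one_smul, zpow_zero, two_smul]
    ring
  | succ I ih =>
    have h1 : Finset.Icc (-((I + 1 : ℕ) : ℤ)) ((I + 1 : ℕ) : ℤ)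
        = insert (-((I + 1 : ℕ) : ℤ)) (insert ((I + 1 : ℕ) : ℤ) (Finset.Icc (-(I : ℤ)) I)) := by
      ext x; simp only [Finset.mem_Icc, Finset.mem_insert]; push_cast; omega
    rw [h1, Finset.sum_insert, Finset.sum_insert, Finset.sum_range_succ, Finset.sum_range_succ _ (I+1)]
    · rw [smul_add, smul_add, ← ih]
      have e : ∀ t : ℤ, t = (I + 1 : ℕ) → (2:ℚ) • ((-1 : ℚ) ^ (-t) • (q (A + -t) * q (B - -t))) = a (I+1) • (q (B + t) * q (A - t)) := by
        intro t ht
        subst ht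
        rw [zpow_neg, zpow_natCast, ← inv_pow, a, if_neg (by omega), smul_smul, sub_neg_eq_add, ← sub_eq_add_neg, mul_comm (q _)]
        norm_num
      rw [e _ rfl]
      rw [zpow_natCast, smul_smul, a, if_neg (by omega)]
      abel
    · simp only [Finset.mem_Icc]; push_cast; omega
    · simp only [Finset.mem_Icc, Finset.mem_insert]; push_cast; omega

lemma S_eq (A B : ℤ) (I : ℕ) (hA : A ≤ I) (hB : B ≤ I) :
    (∑ i ∈ Finset.range (I+1), a i • (q (A + i) * q (B - i)))
      + (∑ i ∈ Finset.range (I+1), a i • (q (B + i) * q (A - i)))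
    = if A + B = 0 then C (2 * (-1 : ℚ) ^ B) else 0 := by
  rw [S_symm]
  rcases lt_or_ge (A + B) 0 with h | h
  · rw [if_neg (by omega), Finset.sum_eq_zero, smul_zero]
    intro i _
    rcases lt_or_ge (A + i) 0 with h' | h'
    · rw [q_neg h']; simp
    · rw [q_neg (r := B - i) (by omega)]; simp
  · obtain ⟨K, hK⟩ := Int.eq_ofNat_of_zero_le h
    have e : ∑ i ∈ Finset.Icc (-(I : ℤ)) I, (-1 : ℚ) ^ i • (q (A + i) * q (B - i))
        = ∑ x ∈ antidiagonal K, (-1 : ℚ) ^ B • ((-1 : ℚ) ^ x.2 • (q x.1 * q x.2)) := by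
      have e1 : ∑ x ∈ antidiagonal K, (-1 : ℚ) ^ B • ((-1 : ℚ) ^ x.2 • (q x.1 * q x.2))
          = ∑ i ∈ (antidiagonal K).image (fun x : ℕ × ℕ => B - (x.2 : ℤ)), (-1 : ℚ) ^ i • (q (A + i) * q (B - i)) := by
        rw [Finset.sum_image]
        · apply Finset.sum_congr rfl
          intro x hx
          rw [Finset.HasAntidiagonal.mem_antidiagonal] at hx
          rw [show A + (B - (x.2 : ℤ)) = x.1 by omega, show B - (B - (x.2 : ℤ)) = x.2 by ring, smul_smul,
            zpow_sub₀ (by norm_num), zpow_natCast, div_eq_mul_inv, ← inv_pow]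
          norm_num
        · intro x hx y hy hxy
          simp only [Finset.mem_coe, Finset.HasAntidiagonal.mem_antidiagonal] at hx hy hxy
          ext <;> omega
      rw [e1]
      symm
      apply Finset.sum_subset
      · intro i hi
        simp only [Finset.mem_image, Finset.HasAntidiagonal.mem_antidiagonal, Finset.mem_Icc] at hi ⊢
        obtain ⟨x, hx, rfl⟩ := hi
        omega
      · intro i _ hi
        rcases lt_or_ge (A + i) 0 with h' | h'
        · rw [q_neg h']; simp
        · rcases lt_or_ge (B - i) 0 with h'' | h''
          · rw [q_neg h'']; simp
          · exfalso
            apply hi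
            simp only [Finset.mem_image, Finset.HasAntidiagonal.mem_antidiagonal]
            exact ⟨((A + i).toNat, (B - i).toNat), by simp; omega, by simp; omega⟩
    rw [e, ← Finset.smul_sum, q_inv, smul_smul, hK]
    by_cases hK0 : K = 0
    · simp [hK0, MvPolynomial.smul_eq_C_mul]
    · rw [if_neg hK0, if_neg (by exact_mod_cast hK0), smul_zero]

lemma QQ (m n : ℤ) (f : Gam ℚ) (N I : ℕ) (hN : bnd f ≤ N) (hI : n + N ≤ I)
    (h : bnd (Qop n f) ≤ I + N) :
    Qop m (Qop n f) = ∑ l ∈ Finset.range N, ∑ j ∈ Finset.range N,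
      (∑ i ∈ Finset.range I, a i • (q (m + j + i) * q (n + l - i))) * D j (D l f) := by
  rw [Q_eq m _ (I + N) h, Q_eq n f N hN]
  simp only [D_sum, D_mul, D_q, Finset.mul_sum]
  rw [Finset.sum_comm]
  apply Finset.sum_congr rfl
  intro l hl
  have hl : l < N := by simpa using hl
  set F : ℕ → ℕ → Gam ℚ := fun i j => (a i • (q (m + j + i) * q (n + l - i))) * D j (D l f) with hF
  have e1 : ∀ k ∈ Finset.range (I + N), ∑ x ∈ antidiagonal k, q (m + k) * (a x.1 • q (n + l - x.1) * D x.2 (D l f))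
      = ∑ i ∈ Finset.range (k+1), F i (k - i) := by
    intro k _
    rw [Finset.Nat.sum_antidiagonal_eq_sum_range_succ_mk]
    apply Finset.sum_congr rfl
    intro i hi
    have hi : i ≤ k := by simp at hi; omega
    simp only [hF]
    rw [show m + ((k - i : ℕ) : ℤ) + i = m + k by omega, MvPolynomial.smul_eq_C_mul, MvPolynomial.smul_eq_C_mul]
    ring
  rw [Finset.sum_congr rfl e1, Finset.sum_range_diag_flip]
  simp only [Finset.sum_mul]
  rw [Finset.sum_comm (s := Finset.range N)]
  symm
  have e2 : ∑ i ∈ Finset.range I, ∑ j ∈ Finset.range (I + N - i), F i j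
      = ∑ i ∈ Finset.range (I + N), ∑ j ∈ Finset.range (I + N - i), F i j := by
    apply Finset.sum_subset
    · intro x hx; simp at hx ⊢; omega
    · intro i _ hi
      apply Finset.sum_eq_zero
      intro j _
      simp only [hF]
      rw [q_neg (r := n + l - i) (by simp at hi; omega)]
      simp
  rw [← e2]
  apply Finset.sum_congr rfl
  intro i hi
  have hi : i < I := by simpa using hi
  apply Finset.sum_subset
  · intro x hx; simp at hx ⊢; omega
  · intro j _ hj
    rw [D_comm, D_bnd (f := f) (k := j) (by simp at hj; omega), D_T]
    simp

theorem main (m n : ℤ) (f : Gam ℚ) :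
    Qop m (Qop n f) + Qop n (Qop m f)
      = if m = -n then (((-1 : ℚ) ^ n * 2) • f) else 0 := by
  set N := bnd f + (-(m+n)).toNat + 1 with hN
  set I := bnd (Qop n f) + bnd (Qop m f) + m.toNat + n.toNat + N with hI
  rw [QQ m n f N (I+1) (by omega) (by omega) (by omega), QQ n m f N (I+1) (by omega) (by omega) (by omega)]
  rw [Finset.sum_comm (γ := ℕ) (f := fun l j : ℕ => (∑ i ∈ Finset.range (I+1), a i • (q (n + j + i) * q (m + l - i))) * D j (D l f))]
  rw [← Finset.sum_add_distrib]
  have e1 : ∀ l ∈ Finset.range N, 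
      (∑ j ∈ Finset.range N, (∑ i ∈ Finset.range (I+1), a i • (q (m + j + i) * q (n + l - i))) * D j (D l f))
      + (∑ j ∈ Finset.range N, (∑ i ∈ Finset.range (I+1), a i • (q (n + l + i) * q (m + j - i))) * D l (D j f))
      = ∑ j ∈ Finset.range N, if (m + n) + (j + l) = 0 then (2 * (-1 : ℚ) ^ n) • ((-1 : ℚ) ^ l • D j (D l f)) else 0 := by
    intro l hl
    rw [← Finset.sum_add_distrib]
    apply Finset.sum_congr rfl
    intro j hj
    simp only [Finset.mem_range] at hl hj
    rw [D_comm l j, ← add_mul, S_eq (m + j) (n + l) I (by omega) (by omega)]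
    rw [show m + j + (n + l) = m + n + (j + l) by ring]
    split_ifs
    · rw [zpow_add₀ (by norm_num), zpow_natCast, MvPolynomial.smul_eq_C_mul, MvPolynomial.smul_eq_C_mul, C_mul, C_mul, C_mul]
      ring
    · simp
  rw [Finset.sum_congr rfl e1]
  rcases lt_or_ge 0 (m + n) with h | h
  · rw [if_neg (by omega)]
    apply Finset.sum_eq_zero
    intro l _
    apply Finset.sum_eq_zero
    intro j _
    rw [if_neg (by omega)]
  · obtain ⟨K, hK⟩ := Int.eq_ofNat_of_zero_le (a := -(m + n)) (by omega)
    have e2 : ∑ l ∈ Finset.range N, ∑ j ∈ Finset.range N, 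
        (if (m + n) + (j + l) = 0 then (2 * (-1 : ℚ) ^ n) • ((-1 : ℚ) ^ l • D j (D l f)) else 0)
        = ∑ x ∈ antidiagonal K, (2 * (-1 : ℚ) ^ n) • ((-1 : ℚ) ^ x.2 • D x.1 (D x.2 f)) := by
      rw [Finset.sum_comm, ← Finset.sum_product', ← Finset.sum_filter]
      apply Finset.sum_congr
      · ext x
        simp only [Finset.mem_filter, Finset.mem_product, Finset.mem_range, Finset.HasAntidiagonal.mem_antidiagonal]
        omega
      · intro x _; rfl
    rw [e2, ← Finset.smul_sum, D_inv]
    by_cases h0 : K = 0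
    · rw [if_pos h0, if_pos (by omega), mul_comm]
    · rw [if_neg h0, if_neg (by omega), smul_zero]

end Cl
end

noncomputable section

theorem clifford_relations (m n : ℤ) (f : Gam ℚ) :
    Qop m (Qop n f) + Qop n (Qop m f)
      = if m = -n then (((-1 : ℚ) ^ n * 2) • f) else 0 := by
  exact Cl.main m n f

end
end

section
/- On the ring Γ with vertex operators G(z) = exp(∑_{n≥1 odd} (2/n) p_n z^n) exp(∑_{n≥1 odd} (t^n−1)(∂/∂p_n) z^{-n}) = ∑_{n∈ℤ} G_n z^n, the components satisfy the quadratic relations (1−t²)(G_m G_n + G_n G_m) + t(G_{m−1}G_{n+1} − G_{n+1}G_{m−1} + G_{n−1}G_{m+1} − G_{m+1}G_{n−1}) = 2(−1)^n (1−t)² δ_{m,−n} for all integers m, n. -/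
open MvPolynomial Finset

noncomputable section
open scoped Classical

/-- The coefficient field ℚ(t). -/
abbrev FF := RatFunc ℚ

instance : CharZero FF :=
  charZero_of_injective_algebraMap (RatFunc.algebraMap_injective ℚ)

/-- The parameter t. -/
def tt : FF := RatFunc.X

/-- Annihilation coefficients d_n = tⁿ - 1 (n odd) of G(z). -/
def dG : ℕ → FF := fun n => if Odd n then tt ^ n - 1 else 0

/-- Creation coefficients 2(tⁿ-1)/n (n odd) of G*(z). -/
def cGs : ℕ → FF := fun n => if Odd n then 2 * (tt ^ n - 1) / (n : FF) else 0

/-- Annihilation coefficients d_n = 1 (n odd) of G*(z). -/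
def dGs : ℕ → FF := fun n => if Odd n then (1 : FF) else 0

/-- The component G_m of G(z) = exp(∑(2/n)pₙzⁿ)exp(∑(tⁿ-1)(∂/∂pₙ)z^{-n}). -/
def Gop (m : ℤ) (f : Gam FF) : Gam FF := vop (cQ FF) dG m f

/-- The component G*_m (coefficient of z^{-m}) of
  G*(z) = exp(∑(2(tⁿ-1)/n)pₙzⁿ)exp(∑(∂/∂pₙ)z^{-n}). -/
def Gstar (m : ℤ) (f : Gam FF) : Gam FF := vop cGs dGs (-m) f

/-- G_λ·1 for a list of nonnegative parts. -/
def Gelem (l : List ℕ) : Gam FF := l.foldr (fun a g => Gop (a : ℤ) g) 1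

/-- G_λ·1 for a list of integer indices. -/
def GelemZ (l : List ℤ) : Gam FF := l.foldr (fun a g => Gop a g) 1

/-- The Q-Kostka polynomial L_{λμ}(t) = 2^{-ℓ(λ)}⟨G_μ·1, Q_λ·1⟩. -/
def Lpoly (l m : List ℕ) : FF := formQ (Gelem m) (Qelem FF l) / 2 ^ l.length

/-- The spin Green polynomial Y^λ_μ(t) = ⟨G_λ(x;t), p_μ⟩. -/
def Ypoly (l : List ℕ) (M : Multiset ℕ) : FF := formQ (Gelem l) (pprod FF M)

/-- z_ρ(t) = z_ρ ∏ⱼ (1 - t^{ρⱼ})⁻¹. -/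
def zpt (ρ : Multiset ℕ) : FF := (zp ρ : FF) / (ρ.map fun j => 1 - tt ^ j).prod

/-- The adjoint power sum operator p*_m = (m/2) ∂/∂p_m. -/
def pstar (m : ℕ) (f : Gam FF) : Gam FF := ((m : FF) / 2) • pder m f

/-- n(λ) = ∑ᵢ (i-1)λᵢ. -/
def nstat (l : List ℕ) : ℕ := ∑ i ∈ Finset.range l.length, i * l.getD i 0

/-- Dominance order on partitions (as decreasing lists), including equal weights. -/
def domin (a b : List ℕ) : Prop := a.sum = b.sum ∧ ∀ i, (b.take i).sum ≤ (a.take i).sum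

/-- The parts of a `Nat.Partition` as a decreasingly sorted list. -/
def listOf {n : ℕ} (ρ : n.Partition) : List ℕ := (ρ.parts.sort (· ≤ ·)).reverse

/-- The i-th part (1-indexed by position in list, 0 beyond the length). -/
def pt (l : List ℕ) (i : ℕ) : ℕ := l.getD i 0

/-- ξ/ν is a horizontal strip: ν ⊆ ξ and ξ_{i+1} ≤ ν_i for all i. -/
def HStrip (ξ ν : List ℕ) : Prop := ∀ i, pt ν i ≤ pt ξ i ∧ pt ξ (i + 1) ≤ pt ν i

/-- The strip ξ/ν has a box in column c. -/
def boxcol (ξ ν : List ℕ) (c : ℕ) : Prop := ∃ i < ξ.length, pt ν i < c ∧ c ≤ pt ξ i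

/-- a(ξ/ν): number of columns with a box of ξ/ν but none in the next column. -/
def acount (ξ ν : List ℕ) : ℕ :=
  ((Finset.Icc 1 (pt ξ 0)).filter fun c => boxcol ξ ν c ∧ ¬ boxcol ξ ν (c + 1)).card

end

noncomputable section

namespace GQ

set_option linter.unusedSectionVars false

variable {F : Type} [Field F] [CharZero F]

lemma aut_eq (ρ : Multiset ℕ) (S : Finset ℕ) (h : ρ.toFinset ⊆ S) :
    aut ρ = ∏ i ∈ S, Nat.factorial (ρ.count i) := by
  unfold aut
  apply Finset.prod_subset h
  intro i _ hi
  rw [Multiset.mem_toFinset] at hi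
  rw [Multiset.count_eq_zero_of_notMem hi, Nat.factorial_zero]

lemma aut_cons (j : ℕ) (ρ : Multiset ℕ) :
    aut (j ::ₘ ρ) = (ρ.count j + 1) * aut ρ := by
  have hj : j ∈ insert j ρ.toFinset := Finset.mem_insert_self _ _
  rw [aut_eq (j ::ₘ ρ) (insert j ρ.toFinset) (by simp [Multiset.toFinset_cons]),
    aut_eq ρ (insert j ρ.toFinset) (Finset.subset_insert _ _),
    ← Finset.mul_prod_erase _ _ hj, ← Finset.mul_prod_erase _ _ hj,
    Multiset.count_cons_self, Nat.factorial_succ, mul_assoc]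
  congr 2
  apply Finset.prod_congr rfl
  intro i hi
  rw [Multiset.count_cons_of_ne (Finset.ne_of_mem_erase hi)]

lemma aut_ne (ρ : Multiset ℕ) : (aut ρ : F) ≠ 0 := by
  have : aut ρ ≠ 0 := Finset.prod_ne_zero_iff.2 fun i _ => Nat.factorial_ne_zero _
  exact_mod_cast this

/-- weight -/
def W (x : ℕ → F) (ρ : Multiset ℕ) : F := (ρ.map x).prod / (aut ρ : F)

lemma W_cons (x : ℕ → F) (j : ℕ) (ρ : Multiset ℕ) :
    ((j ::ₘ ρ).count j : F) * W x (j ::ₘ ρ) = x j * W x ρ := by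
  unfold W
  rw [aut_cons, Multiset.map_cons, Multiset.prod_cons, Multiset.count_cons_self]
  have := aut_ne (F := F) ρ
  have h2 : ((ρ.count j : F) + 1) ≠ 0 := Nat.cast_add_one_ne_zero _
  push_cast
  field_simp

def consPart (j : ℕ) (hj : 0 < j) {k : ℕ} (ρ : Nat.Partition k) : Nat.Partition (k + j) where
  parts := j ::ₘ ρ.parts
  parts_pos := by
    intro i hi
    rcases Multiset.mem_cons.1 hi with rfl | h
    · exact hj
    · exact ρ.parts_pos h
  parts_sum := by rw [Multiset.sum_cons, ρ.parts_sum, add_comm]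

variable {M : Type*} [AddCommGroup M] [Module F M]

lemma PB1 (x : ℕ → F) (j : ℕ) (hj : 0 < j) (k : ℕ) (g : Multiset ℕ → M) :
    ∑ ρ : Nat.Partition (k + j), ((ρ.parts.count j : F) * W x ρ.parts) • g (ρ.parts.erase j)
      = x j • ∑ ρ : Nat.Partition k, W x ρ.parts • g ρ.parts := by
  rw [Finset.smul_sum]
  symm
  apply Finset.sum_of_injOn (consPart j hj)
  · intro a _ b _ h
    have := congrArg Nat.Partition.parts h
    simp only [consPart, Multiset.cons_inj_right] at this
    exact Nat.Partition.ext this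
  · intro _ _; simp
  · intro ρ _ h
    have : j ∉ ρ.parts := by
      intro hm
      apply h
      refine ⟨⟨ρ.parts.erase j, fun hi => ρ.parts_pos (Multiset.mem_of_mem_erase hi), ?_⟩,
        by simp, ?_⟩
      · have h1 := ρ.parts_sum
        rw [← Multiset.cons_erase hm, Multiset.sum_cons] at h1
        omega
      · apply Nat.Partition.ext
        simp [consPart, Multiset.cons_erase hm]
    rw [Multiset.count_eq_zero_of_notMem this]
    simp
  · intro ρ _
    have := W_cons x j ρ.parts
    simp only [consPart, Multiset.erase_cons_head]
    rw [this, mul_smul]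

lemma PB0 (x : ℕ → F) (j : ℕ) (k : ℕ) (hk : k < j) (g : Multiset ℕ → M) :
    ∑ ρ : Nat.Partition k, ((ρ.parts.count j : F) * W x ρ.parts) • g (ρ.parts.erase j) = 0 := by
  apply Finset.sum_eq_zero
  intro ρ _
  have : j ∉ ρ.parts := by
    intro hm
    have := Multiset.le_sum_of_mem hm
    rw [ρ.parts_sum] at this
    omega
  rw [Multiset.count_eq_zero_of_notMem this]
  simp

/-- scalar sums -/
def aa (x : ℕ → F) (k : ℕ) : F := ∑ ρ : Nat.Partition k, W x ρ.parts

lemma aa_zero (x : ℕ → F) : aa x 0 = 1 := by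
  simp [aa, W, aut]

lemma sum_count (s : Multiset ℕ) (k : ℕ) (hs : ∀ i ∈ s, i < k + 1) :
    s.sum = ∑ j ∈ range (k+1), j * s.count j := by
  rw [Finset.sum_multiset_count_of_subset s (range (k+1))]
  · simp [mul_comm]
  · intro i hi
    exact Finset.mem_range.2 (hs i (Multiset.mem_toFinset.1 hi))

lemma aa_rec (x : ℕ → F) (k : ℕ) :
    (k : F) * aa x k = ∑ j ∈ range (k+1), (j : F) * x j * aa x (k - j) := by
  have h1 : (k : F) * aa x k = ∑ ρ : Nat.Partition k, ∑ j ∈ range (k+1),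
      (j : F) * ((ρ.parts.count j : F) * W x ρ.parts) := by
    unfold aa
    rw [Finset.mul_sum]
    apply Finset.sum_congr rfl
    intro ρ _
    have h2 := sum_count ρ.parts k (fun i hi => by
      have := Multiset.le_sum_of_mem hi
      rw [ρ.parts_sum] at this
      omega)
    rw [ρ.parts_sum] at h2
    have h3 : (k : F) = ∑ j ∈ range (k+1), (j : F) * (ρ.parts.count j : F) := by
      exact_mod_cast h2
    conv_lhs => rw [h3]
    rw [Finset.sum_mul]
    simp only [mul_assoc]
  rw [h1, Finset.sum_comm]
  apply Finset.sum_congr rfl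
  intro j hj
  rw [Finset.mem_range] at hj
  rw [← Finset.mul_sum]
  rcases Nat.eq_zero_or_pos j with rfl | hp
  · simp
  · obtain ⟨l, rfl⟩ : ∃ l, k = l + j := ⟨k - j, by omega⟩
    have := PB1 (M := F) x j hp l (fun _ => 1)
    simp only [smul_eq_mul, mul_one] at this
    rw [this, Nat.add_sub_cancel, mul_assoc]
    rfl

lemma pder_add (n : ℕ) (f g : Gam F) : pder n (f + g) = pder n f + pder n g := by
  unfold pder; split <;> simp

lemma pder_smul (n : ℕ) (a : F) (g : Gam F) : pder n (a • g) = a • pder n g := by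
  unfold pder; split <;> simp

lemma pder_zero (n : ℕ) : pder n (0 : Gam F) = 0 := by
  unfold pder; split <;> simp

lemma pder_sum {ι : Type*} (n : ℕ) (s : Finset ι) (g : ι → Gam F) :
    pder n (∑ i ∈ s, g i) = ∑ i ∈ s, pder n (g i) := by
  unfold pder; split <;> simp

lemma pder_mul (n : ℕ) (f g : Gam F) : pder n (f * g) = pder n f * g + f * pder n g := by
  unfold pder; split
  · rw [pderiv_mul]
  · simp

lemma pder_pvar (n k : ℕ) (hn : Odd n) : pder n (pvar F k) = if k = n then 1 else 0 := by
  unfold pder pvar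
  rw [dif_pos hn]
  split
  · split
    · subst k; simp
    · rw [pderiv_X_of_ne]; intro h; simp_all
  · simp only [map_zero]; rw [if_neg]; rintro rfl; contradiction

lemma pder_even (n : ℕ) (hn : ¬ Odd n) (f : Gam F) : pder n f = 0 := by
  unfold pder; rw [dif_neg hn]

lemma pder_comm (i j : ℕ) (f : Gam F) : pder i (pder j f) = pder j (pder i f) := by
  by_cases hi : Odd i
  · by_cases hj : Odd j
    · unfold pder
      simp only [dif_pos hi, dif_pos hj]
      ext m
      simp only [coeff_pderiv]
      by_cases h : i = j
      · subst h; rfl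
      · have h1 : (⟨i, hi⟩ : OddIdx) ≠ ⟨j, hj⟩ := by simpa using h
        simp only [Finsupp.add_apply, Finsupp.single_apply, if_neg h1, if_neg h1.symm]
        rw [add_right_comm]
        ring_nf
    · rw [pder_even j hj, pder_even j hj, pder_zero]
  · rw [pder_even i hi, pder_even i hi, pder_zero]

instance : LeftCommutative (pder (F := F)) := ⟨fun i j f => pder_comm i j f⟩

lemma Dmult_zero (f : Gam F) : Dmult 0 f = f := by simp [Dmult]

lemma Dmult_coe (l : List ℕ) (f : Gam F) : Dmult (l : Multiset ℕ) f = l.foldr pder f := by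
  unfold Dmult
  apply List.Perm.foldr_eq
  rw [← Multiset.coe_eq_coe, Multiset.coe_toList]

lemma Dmult_cons (j : ℕ) (ρ : Multiset ℕ) (f : Gam F) :
    Dmult (j ::ₘ ρ) f = pder j (Dmult ρ f) := by
  induction ρ using Quotient.inductionOn with
  | _ l =>
    show Dmult (((j :: l : List ℕ)) : Multiset ℕ) f = pder j (Dmult (l : Multiset ℕ) f)
    rw [Dmult_coe, Dmult_coe]; rfl

lemma Dmult_add (ρ : Multiset ℕ) (f g : Gam F) : Dmult ρ (f + g) = Dmult ρ f + Dmult ρ g := by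
  induction ρ using Multiset.induction with
  | empty => simp [Dmult_zero]
  | cons j ρ ih => simp [Dmult_cons, ih, pder_add]

lemma Dmult_smul (ρ : Multiset ℕ) (a : F) (g : Gam F) : Dmult ρ (a • g) = a • Dmult ρ g := by
  induction ρ using Multiset.induction with
  | empty => simp [Dmult_zero]
  | cons j ρ ih => simp [Dmult_cons, ih, pder_smul]

lemma Dmult_pder (ρ : Multiset ℕ) (j : ℕ) (g : Gam F) : Dmult ρ (pder j g) = pder j (Dmult ρ g) := by
  induction ρ using Multiset.induction with
  | empty => simp [Dmult_zero]
  | cons i ρ ih => rw [Dmult_cons, Dmult_cons, ih, pder_comm]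

lemma Dmult_pvar (ρ : Multiset ℕ) (j : ℕ) (hj : Odd j) (g : Gam F) :
    Dmult ρ (pvar F j * g)
      = pvar F j * Dmult ρ g + (ρ.count j : F) • Dmult (ρ.erase j) g := by
  induction ρ using Multiset.induction with
  | empty => simp [Dmult_zero]
  | cons i ρ ih =>
    rw [Dmult_cons, ih, pder_add, pder_mul, pder_smul, Dmult_cons]
    by_cases hi : i = j
    · subst hi
      rw [pder_pvar _ _ hj, if_pos rfl, Multiset.count_cons_self, Multiset.erase_cons_head]
      by_cases hm : i ∈ ρ
      · rw [← Dmult_cons i (ρ.erase i), Multiset.cons_erase hm]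
        push_cast
        rw [add_smul, one_smul, one_mul]
        abel
      · rw [Multiset.count_eq_zero_of_notMem hm]
        simp [add_comm]
    · rw [Multiset.erase_cons_tail _ hi, Dmult_cons, Multiset.count_cons_of_ne (Ne.symm hi)]
      have : pder i (pvar F j) = 0 := by
        by_cases ho : Odd i
        · rw [pder_pvar _ _ ho, if_neg (Ne.symm hi)]
        · exact pder_even _ ho _
      rw [this]
      simp

lemma pder_pprod (j : ℕ) (hj : Odd j) (ρ : Multiset ℕ) :
    pder j (pprod F ρ) = (ρ.count j : F) • pprod F (ρ.erase j) := by
  induction ρ using Multiset.induction with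
  | empty =>
    have : pder j (1 : Gam F) = 0 := by unfold pder; rw [dif_pos hj]; simp
    simp [pprod, this]
  | cons i ρ ih =>
    have hc : ∀ i ρ, pprod F (i ::ₘ ρ) = pvar F i * pprod F ρ := by
      intro i ρ; simp [pprod]
    rw [hc, pder_mul, ih, pder_pvar _ _ hj]
    by_cases hi : i = j
    · subst hi
      rw [if_pos rfl, Multiset.count_cons_self, Multiset.erase_cons_head]
      by_cases hm : i ∈ ρ
      · rw [mul_smul_comm, ← hc, Multiset.cons_erase hm]
        push_cast
        rw [add_smul, one_smul, one_mul, add_comm]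
      · rw [Multiset.count_eq_zero_of_notMem hm]
        push_cast
        simp
    · rw [Multiset.erase_cons_tail _ hi, Multiset.count_cons_of_ne (Ne.symm hi), hc, if_neg hi]
      simp

lemma crea_nat (c : ℕ → F) (m : ℕ) :
    crea c (m : ℤ) = ∑ ρ : Nat.Partition m, W c ρ.parts • pprod F ρ.parts := by
  unfold crea
  rw [if_pos (by omega)]
  rfl

lemma crea_neg (c : ℕ → F) (m : ℤ) (hm : m < 0) : crea c m = 0 := by
  unfold crea; rw [if_neg (by omega)]

lemma crea_zero (c : ℕ → F) : crea c 0 = 1 := by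
  have := crea_nat c 0
  rw [Nat.cast_zero] at this
  rw [this]
  simp [W, aut, pprod]

lemma pder_crea (c : ℕ → F) (j : ℕ) (hj : Odd j) (m : ℤ) :
    pder j (crea c m) = c j • crea c (m - j) := by
  rcases lt_or_ge m 0 with hm | hm
  · rw [crea_neg _ _ hm, crea_neg _ _ (by omega), pder_zero, smul_zero]
  · lift m to ℕ using hm
    have h1 : pder j (crea c (m : ℤ)) = ∑ ρ : Nat.Partition m,
        ((ρ.parts.count j : F) * W c ρ.parts) • pprod F (ρ.parts.erase j) := by
      rw [crea_nat, pder_sum]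
      apply Finset.sum_congr rfl
      intro ρ _
      rw [pder_smul, pder_pprod j hj, smul_smul, mul_comm]
    rw [h1]
    rcases lt_or_ge m j with h | h
    · rw [PB0 _ _ _ h, crea_neg _ _ (by omega), smul_zero]
    · obtain ⟨l, rfl⟩ : ∃ l, m = l + j := ⟨m - j, by omega⟩
      rw [PB1 _ _ hj.pos, show ((l + j : ℕ) : ℤ) - j = (l : ℤ) by push_cast; ring, crea_nat]

lemma coeff_crea (c : ℕ → F) (m : ℤ) : coeff 0 (crea c m) = if m = 0 then 1 else 0 := by
  split
  · subst m; rw [crea_zero]; simp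
  · rename_i h
    rcases lt_or_ge m 0 with hm | hm
    · rw [crea_neg _ _ hm]; simp
    · lift m to ℕ using hm
      rw [crea_nat, coeff_sum]
      apply Finset.sum_eq_zero
      intro ρ _
      rw [coeff_smul]
      have : ρ.parts ≠ 0 := by
        intro h0
        have := ρ.parts_sum
        rw [h0] at this
        simp at this
        omega
      obtain ⟨a, ha⟩ := Multiset.exists_mem_of_ne_zero this
      have h2 : coeff 0 (pprod F ρ.parts) = 0 := by
        rw [← Multiset.cons_erase ha]
        have : pprod F (a ::ₘ ρ.parts.erase a) = pvar F a * pprod F (ρ.parts.erase a) := by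
          simp [pprod]
        rw [this, ← constantCoeff_eq, map_mul]
        have : constantCoeff (pvar F a) = 0 := by
          unfold pvar; split <;> simp
        rw [this, zero_mul]
      rw [h2, smul_zero]

lemma annih_eq (d : ℕ → F) (k : ℕ) (f : Gam F) :
    annih d k f = ∑ ρ : Nat.Partition k, W d ρ.parts • Dmult ρ.parts f := rfl

lemma annih_add (d : ℕ → F) (k : ℕ) (f g : Gam F) :
    annih d k (f + g) = annih d k f + annih d k g := by
  simp [annih_eq, Dmult_add, Finset.sum_add_distrib]

lemma annih_smul (d : ℕ → F) (k : ℕ) (a : F) (g : Gam F) :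
    annih d k (a • g) = a • annih d k g := by
  simp only [annih_eq, Dmult_smul, Finset.smul_sum]
  apply Finset.sum_congr rfl
  intro _ _
  rw [smul_comm]

lemma annih_pder (d : ℕ → F) (k j : ℕ) (g : Gam F) :
    annih d k (pder j g) = pder j (annih d k g) := by
  simp only [annih_eq, Dmult_pder, pder_sum, pder_smul]

lemma annih_pvar_lt (d : ℕ → F) (k j : ℕ) (hj : Odd j) (hk : k < j) (g : Gam F) :
    annih d k (pvar F j * g) = pvar F j * annih d k g := by
  have := PB0 d j k hk (fun ρ => Dmult ρ g)
  simp only [annih_eq, Dmult_pvar _ _ hj, smul_add, Finset.sum_add_distrib, Finset.mul_sum,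
    mul_smul_comm, smul_smul, mul_comm (W _ _), this, add_zero]

lemma annih_pvar (d : ℕ → F) (k j : ℕ) (hj : Odd j) (g : Gam F) :
    annih d (k + j) (pvar F j * g) = pvar F j * annih d (k + j) g + d j • annih d k g := by
  have := PB1 d j hj.pos k (fun ρ => Dmult ρ g)
  simp only [annih_eq, Dmult_pvar _ _ hj, smul_add, Finset.sum_add_distrib, Finset.mul_sum,
    mul_smul_comm, smul_smul, mul_comm (W _ _), this]

lemma pder_deg (j : ℕ) (f : Gam F) : pder j f = 0 ∨ (pder j f).totalDegree + 1 ≤ f.totalDegree := by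
  by_cases hj : Odd j
  · unfold pder
    rw [dif_pos hj]
    by_cases h0 : pderiv (⟨j, hj⟩ : OddIdx) f = 0
    · exact Or.inl h0
    · right
      obtain ⟨s, hs, hs2⟩ := exists_mem_eq_sup _ (support_nonempty.2 h0) 
        (fun s : OddIdx →₀ ℕ => s.sum fun _ e => e)
      rw [totalDegree, hs2]
      rw [mem_support_iff, coeff_pderiv] at hs
      have := le_totalDegree (mem_support_iff.2 (left_ne_zero_of_mul hs))
      rw [Finsupp.sum_add_index' (by simp) (by simp)] at this
      simpa using this
  · exact Or.inl (pder_even j hj f)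

lemma Dmult_deg (ρ : Multiset ℕ) (f : Gam F) :
    Dmult ρ f = 0 ∨ (Dmult ρ f).totalDegree + Multiset.card ρ ≤ f.totalDegree := by
  induction ρ using Multiset.induction with
  | empty => simp [Dmult_zero]
  | cons j ρ ih =>
    rw [Dmult_cons, Multiset.card_cons]
    rcases ih with h | h
    · left; rw [h, pder_zero]
    · rcases pder_deg j (Dmult ρ f) with h2 | h2
      · exact Or.inl h2
      · right; omega

lemma Dmult_zero_right (ρ : Multiset ℕ) : Dmult ρ (0 : Gam F) = 0 := by
  have := Dmult_smul ρ (0 : F) 0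
  simpa using this

lemma annih_bnd (d : ℕ → F) (k : ℕ) (f : Gam F) (hk : bnd f ≤ k) : annih d k f = 0 := by
  rw [annih_eq]
  apply Finset.sum_eq_zero
  intro ρ _
  suffices Dmult ρ.parts f = 0 by rw [this, smul_zero]
  set s := f.vars.sup fun v => v.1 with hs
  by_cases h : ∀ j ∈ ρ.parts, j ≤ s
  · rcases Dmult_deg ρ.parts f with h2 | h2
    · exact h2
    · exfalso
      have h3 := Multiset.sum_le_card_nsmul _ _ h
      rw [ρ.parts_sum, smul_eq_mul] at h3
      unfold bnd at hk
      rw [← hs] at hk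
      have : Multiset.card ρ.parts ≤ f.totalDegree := by omega
      nlinarith
  · push Not at h
    obtain ⟨j, hj, hjs⟩ := h
    rw [← Multiset.cons_erase hj, Dmult_cons, ← Dmult_pder]
    have : pder j f = 0 := by
      unfold pder
      split
      · rename_i ho
        apply pderiv_eq_zero_of_notMem_vars
        intro hm
        have := Finset.le_sup (f := fun v : OddIdx => v.1) hm
        simp only at this
        omega
      · rfl
    rw [this, Dmult_zero_right]

lemma vop_eq (c d : ℕ → F) (m : ℤ) (f : Gam F) (N : ℕ) (hN : bnd f ≤ N) :
    vop c d m f = ∑ k ∈ range N, crea c (m + k) * annih d k f := by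
  unfold vop
  apply Finset.sum_subset
  · intro i hi; simp at *; omega
  · intro i _ hi
    rw [annih_bnd, mul_zero]
    simpa using hi

lemma vop_add (c d : ℕ → F) (m : ℤ) (f g : Gam F) :
    vop c d m (f + g) = vop c d m f + vop c d m g := by
  rw [vop_eq c d m (f+g) (bnd f + bnd g + bnd (f+g)) (by omega),
    vop_eq c d m f (bnd f + bnd g + bnd (f+g)) (by omega),
    vop_eq c d m g (bnd f + bnd g + bnd (f+g)) (by omega), ← Finset.sum_add_distrib]
  simp only [annih_add, mul_add]

lemma vop_smul (c d : ℕ → F) (m : ℤ) (a : F) (g : Gam F) :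
    vop c d m (a • g) = a • vop c d m g := by
  rw [vop_eq c d m (a • g) (bnd g + bnd (a • g)) (by omega),
    vop_eq c d m g (bnd g + bnd (a • g)) (by omega), Finset.smul_sum]
  simp only [annih_smul, mul_smul_comm]

lemma vop_pder (c d : ℕ → F) (m : ℤ) (j : ℕ) (hj : Odd j) (g : Gam F) :
    pder j (vop c d m g) = vop c d m (pder j g) + c j • vop c d (m - j) g := by
  rw [vop_eq c d m g (bnd g + bnd (pder j g)) (by omega),
    vop_eq c d m (pder j g) (bnd g + bnd (pder j g)) (by omega),
    vop_eq c d (m - j) g (bnd g + bnd (pder j g)) (by omega), Finset.smul_sum, pder_sum,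
    ← Finset.sum_add_distrib]
  apply Finset.sum_congr rfl
  intro k _
  rw [pder_mul, pder_crea c j hj, annih_pder, add_comm, smul_mul_assoc, add_sub_right_comm]

lemma vop_pvar (c d : ℕ → F) (m : ℤ) (j : ℕ) (hj : Odd j) (g : Gam F) :
    vop c d m (pvar F j * g) = pvar F j * vop c d m g + d j • vop c d (m + j) g := by
  obtain ⟨N, hN⟩ : ∃ N, N = bnd g + bnd (pvar F j * g) := ⟨_, rfl⟩
  rw [vop_eq c d m (pvar F j * g) (j + N) (by omega),
    vop_eq c d m g (j + N) (by omega), vop_eq c d (m + j) g N (by omega),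
    Finset.sum_range_add, Finset.sum_range_add, mul_add, add_assoc]
  congr 1
  · rw [Finset.mul_sum]
    apply Finset.sum_congr rfl
    intro k hk
    rw [annih_pvar_lt d k j hj (by simpa using hk)]
    ring
  · rw [Finset.mul_sum, Finset.smul_sum, ← Finset.sum_add_distrib]
    apply Finset.sum_congr rfl
    intro k hk
    rw [add_comm j k, annih_pvar d k j hj]
    rw [mul_add, mul_smul_comm, show m + ((k + j : ℕ) : ℤ) = m + j + k by push_cast; ring]
    ring

lemma Dmult_crea (c : ℕ → F) (hc : ∀ j, ¬ Odd j → c j = 0) (ρ : Multiset ℕ) (n : ℤ) :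
    Dmult ρ (crea c n) = (ρ.map c).prod • crea c (n - (ρ.sum : ℕ)) := by
  induction ρ using Multiset.induction with
  | empty => simp [Dmult_zero]
  | cons j ρ ih =>
    rw [Dmult_cons, ih, pder_smul, Multiset.map_cons, Multiset.prod_cons, Multiset.sum_cons]
    by_cases hj : Odd j
    · rw [pder_crea c j hj, smul_smul, mul_comm (c j)]
      congr 2
      push_cast; ring
    · rw [pder_even j hj, hc j hj]; simp

lemma annih_crea (c d : ℕ → F) (hc : ∀ j, ¬ Odd j → c j = 0) (k : ℕ) (n : ℤ) :
    annih d k (crea c n) = aa (fun j => d j * c j) k • crea c (n - k) := by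
  rw [annih_eq, aa, Finset.sum_smul]
  apply Finset.sum_congr rfl
  intro ρ _
  rw [Dmult_crea c hc, ρ.parts_sum, smul_smul]
  congr 1
  unfold W
  rw [Multiset.prod_map_mul]
  ring

lemma vop_one (c d : ℕ → F) (n : ℤ) : vop c d n 1 = crea c n := by
  rw [vop_eq c d n 1 (1 + bnd (1 : Gam F)) (by omega), Finset.sum_range_add]
  have h0 : annih d 0 (1 : Gam F) = 1 := by simp [annih_eq, W, aut, Dmult_zero]
  rw [Finset.sum_range_one, h0, Finset.sum_eq_zero]
  · simp
  · intro k _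
    rw [annih_eq, Finset.sum_eq_zero, mul_zero]
    intro ρ _
    rcases Dmult_deg ρ.parts (1 : Gam F) with h | h
    · rw [h, smul_zero]
    · exfalso
      rw [totalDegree_one] at h
      have : ρ.parts = 0 := by rw [← Multiset.card_eq_zero]; omega
      have h2 := ρ.parts_sum
      rw [this] at h2
      simp at h2
      omega

lemma eq_zero_of_pder (f : Gam F) (h : ∀ j, Odd j → pder j f = 0) (h0 : coeff 0 f = 0) : f = 0 := by
  ext m
  by_cases hm : m = 0
  · subst hm; simpa using h0
  · obtain ⟨i, hi⟩ := Finsupp.ne_iff.1 hm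
    simp only [Finsupp.coe_zero, Pi.zero_apply] at hi
    have h1 := h i.1 i.2
    unfold pder at h1
    rw [dif_pos i.2] at h1
    have h2 := congrArg (coeff (m - Finsupp.single i 1)) h1
    rw [coeff_pderiv, tsub_add_cancel_of_le, coeff_zero] at h2
    · rcases mul_eq_zero.1 h2 with h3 | h3
      · simpa using h3
      · exfalso
        exact (Nat.cast_add_one_ne_zero _ h3)
    · rw [Finsupp.single_le_iff]; omega

end GQ

namespace GQ

lemma closed {K : Type*} [Field K] [CharZero K] (t : K) (ht : 1 + t ≠ 0) (a u v : ℕ → K)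
    (a0 : a 0 = 1) (u0 : u 0 = 0) (v0 : v 0 = 0)
    (u1 : u 1 = t) (v1 : v 1 = 1)
    (hu : ∀ n, u (n + 2) = t * a (n + 1) + t ^ 2 * u n)
    (hv : ∀ n, v (n + 2) = a (n + 1) + v n)
    (ha : ∀ n : ℕ, (n : K) * a n = 2 * (u n - v n)) (n : ℕ) :
    (1 + t) * a (n + 1) = 2 * (t - 1) * (t ^ (n + 1) - (-1) ^ (n + 1)) := by
  have fu : ∀ k : ℕ, (1 + t) ^ 2 * u k = ((t ^ 2 - 1) * (k + 1) + (1 + 2 * t - t ^ 2)) * t ^ k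
      - 2 * t * (-1) ^ k →
      (1 + t) ^ 2 * v k = ((t ^ 2 - 1) * (k + 1) + (1 - 2 * t - t ^ 2)) * (-1) ^ k
      + 2 * t * t ^ k → k ≠ 0 → (1 + t) * a k = 2 * (t - 1) * (t ^ k - (-1) ^ k) := by
    intro k h1 h2 hk
    have hk' : (k : K) ≠ 0 := by exact_mod_cast hk
    have h3 := ha k
    apply mul_left_cancel₀ hk'
    apply mul_left_cancel₀ ht
    linear_combination (1 + t) ^ 2 * h3 + 2 * h1 - 2 * h2
  have main : ∀ k : ℕ,
      ((1 + t) ^ 2 * u k = ((t ^ 2 - 1) * (k + 1) + (1 + 2 * t - t ^ 2)) * t ^ k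
        - 2 * t * (-1) ^ k ∧
      (1 + t) ^ 2 * v k = ((t ^ 2 - 1) * (k + 1) + (1 - 2 * t - t ^ 2)) * (-1) ^ k
        + 2 * t * t ^ k) ∧
      ((1 + t) ^ 2 * u (k + 1) = ((t ^ 2 - 1) * ((k + 1 : ℕ) + 1) + (1 + 2 * t - t ^ 2)) * t ^ (k + 1)
        - 2 * t * (-1) ^ (k + 1) ∧
      (1 + t) ^ 2 * v (k + 1) = ((t ^ 2 - 1) * ((k + 1 : ℕ) + 1) + (1 - 2 * t - t ^ 2)) * (-1) ^ (k + 1)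
        + 2 * t * t ^ (k + 1)) := by
    intro k
    induction k with
    | zero =>
      simp only [u0, v0, zero_add, u1, v1]
      push_cast
      refine ⟨⟨?_, ?_⟩, ?_, ?_⟩ <;> ring
    | succ k ih =>
      refine ⟨ih.2, ?_, ?_⟩
      · have h := fu (k + 1) ih.2.1 ih.2.2 (by omega)
        have h1 := ih.1.1
        rw [hu k]
        push_cast
        linear_combination t * (1 + t) * h + t ^ 2 * h1
      · have h := fu (k + 1) ih.2.1 ih.2.2 (by omega)
        have h1 := ih.1.2
        rw [hv k]
        push_cast
        linear_combination (1 + t) * h + h1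
  exact fu (n + 1) (main n).2.1 (main n).2.2 (by omega)

/-- the contraction coefficients -/
def xG : ℕ → FF := fun j => dG j * cQ FF j

def ag (k : ℕ) : FF := aa xG k

def SS (r : FF) (n : ℕ) : FF := ∑ j ∈ range (n + 1), (if Odd j then r ^ j else 0) * ag (n - j)

lemma ag_zero : ag 0 = 1 := aa_zero _

lemma SS_zero (r : FF) : SS r 0 = 0 := by simp [SS]

lemma SS_one (r : FF) : SS r 1 = r := by simp [SS, Finset.sum_range_succ, ag_zero]

lemma SS_rec (r : FF) (n : ℕ) : SS r (n + 2) = r * ag (n + 1) + r ^ 2 * SS r n := by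
  unfold SS
  rw [Finset.sum_range_succ', Finset.sum_range_succ', Finset.mul_sum]
  have h0 : ¬ Odd 0 := by decide
  have h1 : Odd (0 + 1) := by decide
  rw [if_neg h0, if_pos h1]
  have : ∀ k, n + 2 - (k + 1 + 1) = n - k := fun k => by omega
  have h2 : ∀ k, Odd (k + 1 + 1) ↔ Odd k := fun k => by
    rw [Nat.odd_add_one, Nat.odd_add_one, not_not]
  rw [show n + 2 - (0 + 1) = n + 1 by omega, zero_mul, add_zero, add_comm]
  congr 1
  · ring
  · apply Finset.sum_congr rfl
    intro k _
    rw [this]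
    simp only [h2]
    split
    · ring
    · ring

lemma ag_SS (n : ℕ) : (n : FF) * ag n = 2 * (SS tt n - SS 1 n) := by
  unfold ag SS
  rw [aa_rec, ← Finset.sum_sub_distrib, Finset.mul_sum]
  apply Finset.sum_congr rfl
  intro j _
  have hx : xG j = dG j * cQ FF j := rfl
  rw [hx]
  unfold dG cQ ag
  split
  · rename_i h
    have : (j : FF) ≠ 0 := by
      have := h.pos.ne'
      exact_mod_cast this
    field_simp
    ring
  · simp

lemma tt_ne : (1 : FF) + tt ≠ 0 := by
  unfold tt
  have h : (1 : FF) + RatFunc.X = algebraMap (Polynomial ℚ) FF (Polynomial.X + Polynomial.C 1) := by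
    simp [add_comm]
  rw [h]
  intro h2
  rw [map_eq_zero_iff _ (RatFunc.algebraMap_injective ℚ)] at h2
  exact Polynomial.X_add_C_ne_zero 1 h2

lemma ag_closed (n : ℕ) :
    (1 + tt) * ag (n + 1) = 2 * (tt - 1) * (tt ^ (n + 1) - (-1) ^ (n + 1)) :=
  closed tt tt_ne ag (SS tt) (SS 1) ag_zero (SS_zero _) (SS_zero _) (SS_one _) (SS_one _)
    (SS_rec _) (fun n => by rw [SS_rec]; ring) ag_SS n

def al (n : ℤ) : FF := if 0 ≤ n then ag n.toNat else 0

lemma al_nat (n : ℕ) : al n = ag n := by simp [al]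
lemma al_neg (n : ℤ) (h : n < 0) : al n = 0 := by unfold al; rw [if_neg (by omega)]

lemma al_id_nat (k : ℕ) :
    (1 - tt ^ 2) * (al k + al (-k)) + tt * (al (k + 1) - al (-k - 1) + al (-k + 1) - al (k - 1))
      = 2 * (-1) ^ k * (1 - tt) ^ 2 := by
  have ht := tt_ne
  have c0 := ag_closed 0
  rcases k with _ | k
  · have e0 : al 0 = 1 := by rw [← Nat.cast_zero, al_nat, ag_zero]
    have e1 : al 1 = ag 1 := by rw [← Nat.cast_one, al_nat]
    simp only [Nat.cast_zero, neg_zero, zero_add, zero_sub, e0, e1]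
    rw [al_neg (-1) (by omega)]
    apply mul_left_cancel₀ ht
    linear_combination 2 * tt * c0
  · have e1 : al ((k + 1 : ℕ) : ℤ) = ag (k + 1) := al_nat _
    have e2 : al (((k + 1 : ℕ) : ℤ) + 1) = ag (k + 2) := by
      rw [← al_nat]; congr 1
    have e3 : al (((k + 1 : ℕ) : ℤ) - 1) = ag k := by
      rw [← al_nat]; congr 1; push_cast; ring
    rw [e1, e2, e3, al_neg (-((k + 1 : ℕ) : ℤ)) (by omega),
      al_neg (-((k + 1 : ℕ) : ℤ) - 1) (by omega)]
    have c1 := ag_closed k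
    have c2 := ag_closed (k + 1)
    apply mul_left_cancel₀ ht
    rcases k with _ | k
    · rw [show -(((0 + 1 : ℕ)) : ℤ) + 1 = ((0 : ℕ) : ℤ) by simp, al_nat]
      linear_combination (1 - tt ^ 2) * c1 + tt * c2
    · rw [al_neg _ (by push_cast; omega)]
      have c3 := ag_closed k
      linear_combination (1 - tt ^ 2) * c1 + tt * c2 - tt * c3

lemma al_id (n : ℤ) :
    (1 - tt ^ 2) * (al n + al (-n)) + tt * (al (n + 1) - al (-n - 1) + al (-n + 1) - al (n - 1))
      = 2 * (-1) ^ n * (1 - tt) ^ 2 := by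
  obtain ⟨k, rfl | rfl⟩ := n.eq_nat_or_neg
  · rw [zpow_natCast]; exact al_id_nat k
  · have h : ((-1 : FF)) ^ (-(k : ℤ)) = (-1) ^ k := by
      rw [zpow_neg, zpow_natCast, ← inv_pow]; norm_num
    rw [h, ← al_id_nat k, neg_neg]
    ring

def E (m n : ℤ) (f : Gam FF) : Gam FF := Gop m (Gop n f)

lemma Gop_add (m : ℤ) (f g : Gam FF) : Gop m (f + g) = Gop m f + Gop m g := vop_add _ _ _ _ _
lemma Gop_smul (m : ℤ) (a : FF) (g : Gam FF) : Gop m (a • g) = a • Gop m g := vop_smul _ _ _ _ _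

lemma E_add (m n : ℤ) (f g : Gam FF) : E m n (f + g) = E m n f + E m n g := by
  simp [E, Gop_add]

lemma E_smul (m n : ℤ) (a : FF) (g : Gam FF) : E m n (a • g) = a • E m n g := by
  simp [E, Gop_smul]

lemma E_pvar (m n : ℤ) (j : ℕ) (hj : Odd j) (g : Gam FF) :
    E m n (pvar FF j * g) = pvar FF j * E m n g + dG j • (E (m + j) n g + E m (n + j) g) := by
  have h : ∀ m g, Gop m (pvar FF j * g) = pvar FF j * Gop m g + dG j • Gop (m + j) g :=
    fun m g => vop_pvar _ _ _ _ hj _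
  unfold E
  rw [h, Gop_add, h, Gop_smul, smul_add, add_assoc]

lemma E_pder (m n : ℤ) (j : ℕ) (hj : Odd j) (g : Gam FF) :
    pder j (E m n g) = E m n (pder j g) + cQ FF j • (E (m - j) n g + E m (n - j) g) := by
  have h : ∀ m g, pder j (Gop m g) = Gop m (pder j g) + cQ FF j • Gop (m - j) g :=
    fun m g => vop_pder _ _ _ _ hj _
  unfold E
  rw [h, h, Gop_add, Gop_smul, smul_add]
  abel

lemma E_one (m n : ℤ) : ∃ N : ℕ, n < N ∧ E m n 1
    = ∑ k ∈ range N, ag k • (crea (cQ FF) (m + k) * crea (cQ FF) (n - k)) := by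
  unfold E
  have h1 : Gop n 1 = crea (cQ FF) n := vop_one _ _ _
  rw [h1]
  refine ⟨bnd (crea (cQ FF) n) + n.toNat + 1, by push_cast; omega, ?_⟩
  unfold Gop
  rw [vop_eq _ _ _ _ (bnd (crea (cQ FF) n) + n.toNat + 1) (by omega)]
  apply Finset.sum_congr rfl
  intro k _
  rw [annih_crea _ _ (fun j hj => by simp [cQ, hj]), mul_smul_comm]
  rfl

lemma E_one_neg (m n : ℤ) (h : m + n < 0) : E m n 1 = 0 := by
  obtain ⟨N, _, hN⟩ := E_one m n
  rw [hN]
  apply Finset.sum_eq_zero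
  intro k _
  rcases lt_or_ge (m + k) 0 with h1 | h1
  · rw [crea_neg _ _ h1, zero_mul, smul_zero]
  · rw [crea_neg _ (n - k) (by omega), mul_zero, smul_zero]

lemma E_one_coeff (m n : ℤ) : coeff 0 (E m n 1) = if m + n = 0 then al n else 0 := by
  obtain ⟨N, hn, hN⟩ := E_one m n
  rw [hN, coeff_sum]
  have h : ∀ k : ℕ, coeff 0 (ag k • (crea (cQ FF) (m + k) * crea (cQ FF) (n - k)))
      = if (m + k = 0 ∧ n - k = 0) then ag k else 0 := by
    intro k
    rw [coeff_smul, ← constantCoeff_eq, map_mul, constantCoeff_eq, coeff_crea, coeff_crea]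
    by_cases h1 : m + k = 0 <;> by_cases h2 : n - k = 0 <;> simp [h1, h2]
  simp only [h]
  split
  · rename_i hmn
    rcases lt_or_ge n 0 with h1 | h1
    · rw [al_neg n h1]
      apply Finset.sum_eq_zero
      intro k _
      rw [if_neg (by omega)]
    · lift n to ℕ using h1
      rw [al_nat, Finset.sum_eq_single n]
      · rw [if_pos (by omega)]
      · intro b _ hb
        rw [if_neg (by omega)]
      · intro hb
        simp at hb
        omega
  · apply Finset.sum_eq_zero
    intro k _
    rw [if_neg (by omega)]

def rr (m n : ℤ) : FF := if m = -n then 2 * (-1 : FF) ^ n * (1 - tt) ^ 2 else 0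

lemma rr_add (m n : ℤ) (j : ℤ) (hj : Odd j) : rr (m + j) n + rr m (n + j) = 0 := by
  unfold rr
  by_cases h : m + j = -n
  · rw [if_pos h, if_pos (by omega), zpow_add₀ (by norm_num), hj.neg_one_zpow]
    ring
  · rw [if_neg h, if_neg (by omega), add_zero]

def B (m n : ℤ) (f : Gam FF) : Gam FF :=
  (1 - tt ^ 2) • (E m n f + E n m f)
      + tt • (E (m - 1) (n + 1) f - E (n + 1) (m - 1) f
              + E (n - 1) (m + 1) f - E (m + 1) (n - 1) f) - rr m n • f

lemma B_add (m n : ℤ) (f g : Gam FF) : B m n (f + g) = B m n f + B m n g := by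
  simp only [B, E_add, MvPolynomial.smul_eq_C_mul]; ring

lemma B_smul (m n : ℤ) (a : FF) (f : Gam FF) : B m n (a • f) = a • B m n f := by
  simp only [B, E_smul]; simp only [MvPolynomial.smul_eq_C_mul]; ring

lemma B_pvar (m n : ℤ) (j : ℕ) (hj : Odd j) (g : Gam FF) :
    B m n (pvar FF j * g) = pvar FF j * B m n g + dG j • (B (m + j) n g + B m (n + j) g) := by
  have h : rr (m + j) n = - rr m (n + j) :=
    eq_neg_of_add_eq_zero_left (rr_add m n j (by exact_mod_cast hj))
  simp only [B, E_pvar _ _ j hj, h]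
  rw [show m - 1 + (j : ℤ) = m + j - 1 by ring, show n - 1 + (j : ℤ) = n + j - 1 by ring,
    show m + 1 + (j : ℤ) = m + j + 1 by ring, show n + 1 + (j : ℤ) = n + j + 1 by ring]
  simp only [MvPolynomial.smul_eq_C_mul, map_neg]
  ring

lemma B_pder (m n : ℤ) (j : ℕ) (hj : Odd j) (g : Gam FF) :
    pder j (B m n g) = B m n (pder j g) + cQ FF j • (B (m - j) n g + B m (n - j) g) := by
  have h : rr (m - j) n = - rr m (n - j) :=
    eq_neg_of_add_eq_zero_left (by
      have := rr_add m n (-j) (by rw [odd_neg]; exact_mod_cast hj)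
      simpa [← sub_eq_add_neg] using this)
  have hs : ∀ f g : Gam FF, pder j (f - g) = pder j f - pder j g := by
    intro f g
    rw [sub_eq_add_neg, pder_add, ← neg_one_smul FF g, pder_smul, neg_one_smul, ← sub_eq_add_neg]
  simp only [B, pder_add, hs, pder_smul, E_pder _ _ j hj, h]
  rw [show m - 1 - (j : ℤ) = m - j - 1 by ring, show n - 1 - (j : ℤ) = n - j - 1 by ring,
    show m + 1 - (j : ℤ) = m - j + 1 by ring, show n + 1 - (j : ℤ) = n - j + 1 by ring]
  simp only [MvPolynomial.smul_eq_C_mul, map_neg]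
  ring

lemma B_one_coeff (m n : ℤ) : coeff 0 (B m n 1) = 0 := by
  simp only [B, coeff_sub, coeff_add, coeff_smul, E_one_coeff, smul_eq_mul]
  rw [MvPolynomial.coeff_zero_one]
  by_cases h : m + n = 0
  · obtain rfl : m = -n := by omega
    have := al_id n
    simp only [rr, if_pos]
    rw [if_pos (by omega), if_pos (by omega), if_pos (by omega), if_pos (by omega),
      if_pos (by omega), if_pos (by omega), ← this]
    ring
  · rw [if_neg (by omega), if_neg (by omega), if_neg (by omega), if_neg (by omega),
      if_neg (by omega), if_neg (by omega), rr, if_neg (by omega)]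
    ring

lemma B_one_neg (m n : ℤ) (h : m + n < 0) : B m n 1 = 0 := by
  unfold B
  rw [E_one_neg _ _ (by omega), E_one_neg _ _ (by omega), E_one_neg _ _ (by omega),
    E_one_neg _ _ (by omega), E_one_neg _ _ (by omega), E_one_neg _ _ (by omega), rr,
    if_neg (by omega)]
  simp

lemma B_one_lt (N : ℕ) : ∀ m n : ℤ, m + n < N → B m n 1 = 0 := by
  induction N with
  | zero => intro m n h; exact B_one_neg m n (by simpa using h)
  | succ N ih =>
    intro m n h
    push_cast at h
    apply eq_zero_of_pder _ _ (B_one_coeff m n)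
    intro j hj
    have hp := hj.pos
    have h1 : pder j (1 : Gam FF) = 0 := by unfold pder; rw [dif_pos hj]; simp
    have h0 : B m n (0 : Gam FF) = 0 := by simpa using B_smul m n 0 0
    rw [B_pder m n j hj, h1, h0, ih _ _ (by omega), ih _ _ (by omega)]
    simp

lemma B_one (m n : ℤ) : B m n 1 = 0 := B_one_lt ((m + n).toNat + 1) m n (by push_cast; omega)

lemma B_all (f : Gam FF) : ∀ m n : ℤ, B m n f = 0 := by
  induction f using MvPolynomial.induction_on with
  | C a =>
    intro m n
    have : (C a : Gam FF) = a • 1 := by rw [MvPolynomial.smul_eq_C_mul, mul_one]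
    rw [this, B_smul, B_one, smul_zero]
  | add p q hp hq => intro m n; rw [B_add, hp, hq, add_zero]
  | mul_X p i hp =>
    intro m n
    have : p * X i = pvar FF i.1 * p := by
      unfold pvar; rw [dif_pos i.2, mul_comm]
    rw [this, B_pvar m n _ i.2, hp, hp, hp]
    simp

end GQ

end

noncomputable section

theorem G_quadratic_relations (m n : ℤ) (f : Gam FF) :
    (1 - tt ^ 2) • (Gop m (Gop n f) + Gop n (Gop m f))
      + tt • (Gop (m - 1) (Gop (n + 1) f) - Gop (n + 1) (Gop (m - 1) f)
              + Gop (n - 1) (Gop (m + 1) f) - Gop (m + 1) (Gop (n - 1) f))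
    = if m = -n then ((2 * (-1 : FF) ^ n * (1 - tt) ^ 2) • f) else 0 := by
  have h := sub_eq_zero.1 (GQ.B_all f m n)
  simp only [GQ.E] at h
  rw [h, GQ.rr]
  split
  · rfl
  · rw [zero_smul]

end
end

section
/- Two-row formula for spin Green polynomials: for a strict partition (k, n−k) with k > n−k > 0 and μ ∈ OP_n, Y^{(k,n−k)}_μ(t) = (2(t−1)/(t+1))·([D_t(μ)t^{−k}]_+ − [D_t(μ)t^{−k}]_+|_{t=−1}) + D^{(n−k)}(μ), where [f]_+ denotes the polynomial part (nonnegative powers of t) of the Laurent polynomial f, D_t(μ) = ∑_i D^{(i)}(μ)t^i, and D^{(i)}(μ) is the number of subpartitions of μ of weight i. -/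
open MvPolynomial Finset

noncomputable section
open scoped Classical

/-- D_t(μ) = ∑_i D^{(i)}(μ) t^i as a polynomial in ℚ[t]. -/
def Dpoly (m : List ℕ) : Polynomial ℚ :=
  ∑ S : Finset (Fin m.length), Polynomial.X ^ (∑ j ∈ S, m.get j)

/-- The polynomial part [P·t^{-k}]_+ of P·t^{-k}. -/
def plusPart (k : ℕ) (P : Polynomial ℚ) : Polynomial ℚ :=
  ∑ j ∈ Finset.range (P.natDegree + 1),
    if k ≤ j then Polynomial.C (P.coeff j) * Polynomial.X ^ (j - k) else 0

theorem aut_cons (i : ℕ) (s : Multiset ℕ) : aut (i ::ₘ s) = (s.count i + 1) * aut s := by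
  have h1 : aut s = ∏ x ∈ insert i s.toFinset, Nat.factorial (s.count x) := by
    unfold aut
    apply Finset.prod_subset (Finset.subset_insert _ _)
    intro x _ hx
    rw [Multiset.mem_toFinset] at hx
    simp [Multiset.count_eq_zero_of_notMem hx]
  have h2 : aut (i ::ₘ s) = ∏ x ∈ insert i s.toFinset, Nat.factorial ((i ::ₘ s).count x) := by
    unfold aut
    rw [Multiset.toFinset_cons]
  rw [h1, h2, ← Finset.mul_prod_erase _ _ (Finset.mem_insert_self i s.toFinset),
    ← Finset.mul_prod_erase _ (fun x => Nat.factorial (s.count x)) (Finset.mem_insert_self i s.toFinset)]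
  rw [Multiset.count_cons_self, Nat.factorial_succ, mul_assoc]
  congr 2
  apply Finset.prod_congr rfl
  intro x hx
  rw [Multiset.count_cons_of_ne (Finset.ne_of_mem_erase hx)]

theorem aut_ne (s : Multiset ℕ) : aut s ≠ 0 := by
  unfold aut
  exact Finset.prod_ne_zero_iff.2 fun x _ => Nat.factorial_ne_zero _

/-- generic partition sum -/
def SS (F : Type) [Field F] {A : Type} [CommRing A] [Algebra F A] (a : ℕ → A) (m : ℕ) : A :=
  ∑ ρ : Nat.Partition m, ((aut ρ.parts : F)⁻¹) • (ρ.parts.map a).prod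

theorem SS_mark (F : Type) [Field F] [CharZero F] {A : Type} [CommRing A] [Algebra F A] (a : ℕ → A)
    (m i : ℕ) (hi : 0 < i) (him : i ≤ m) :
    ∑ ρ : Nat.Partition m, ((ρ.parts.count i : F) * (aut ρ.parts : F)⁻¹) • (ρ.parts.map a).prod
      = a i * SS F a (m - i) := by
  unfold SS
  rw [Finset.mul_sum]
  symm
  let e : Nat.Partition (m - i) → Nat.Partition m := fun σ =>
    ⟨i ::ₘ σ.parts, by
      intro j hj
      rcases Multiset.mem_cons.1 hj with h | h
      · omega
      · exact σ.parts_pos h, by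
      rw [Multiset.sum_cons, σ.parts_sum]; omega⟩
  apply Finset.sum_of_injOn e
  · intro x _ y _ h
    have : i ::ₘ x.parts = i ::ₘ y.parts := congrArg Nat.Partition.parts h
    exact Nat.Partition.ext ((Multiset.cons_inj_right i).1 this)
  · simp
  · intro ρ _ hρ
    have : i ∉ ρ.parts := by
      intro hmem
      apply hρ
      obtain ⟨t, ht⟩ := Multiset.exists_cons_of_mem hmem
      have hs := ρ.parts_sum
      rw [ht, Multiset.sum_cons] at hs
      refine ⟨⟨t, ?_, by omega⟩, by simp, ?_⟩
      · intro j hj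
        exact ρ.parts_pos (by rw [ht]; exact Multiset.mem_cons_of_mem hj)
      · exact Nat.Partition.ext ht.symm
    rw [Multiset.count_eq_zero_of_notMem this]
    simp
  · intro σ _
    show a i * _ = (((i ::ₘ σ.parts).count i : F) * (aut (i ::ₘ σ.parts) : F)⁻¹) • ((i ::ₘ σ.parts).map a).prod
    rw [aut_cons, Multiset.count_cons_self, Multiset.map_cons, Multiset.prod_cons, mul_smul_comm]
    congr 1
    have h1 : ((σ.parts.count i : F) + 1) ≠ 0 := by exact_mod_cast Nat.succ_ne_zero (σ.parts.count i)
    have h2 : (aut σ.parts : F) ≠ 0 := by exact_mod_cast aut_ne _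
    push_cast
    field_simp

theorem SS_rec (F : Type) [Field F] [CharZero F] {A : Type} [CommRing A] [Algebra F A] (a : ℕ → A)
    (m : ℕ) : (m : F) • SS F a m = ∑ i ∈ Finset.Icc 1 m, (i : F) • (a i * SS F a (m - i)) := by
  have : ∀ i ∈ Finset.Icc 1 m, (i : F) • (a i * SS F a (m - i)) = ∑ ρ : Nat.Partition m,
      ((i : F) * ((ρ.parts.count i : F) * (aut ρ.parts : F)⁻¹)) • (ρ.parts.map a).prod := by
    intro i hi
    rw [Finset.mem_Icc] at hi
    rw [← SS_mark F a m i (by omega) hi.2, Finset.smul_sum]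
    simp only [mul_smul]
  rw [Finset.sum_congr rfl this, Finset.sum_comm]
  unfold SS
  rw [Finset.smul_sum]
  apply Finset.sum_congr rfl
  intro ρ _
  rw [← Finset.sum_smul, ← mul_smul]
  congr 1
  have h := Finset.sum_multiset_count_of_subset ρ.parts (Finset.Icc 1 m) (by
    intro x hx
    rw [Multiset.mem_toFinset] at hx
    have := ρ.parts_pos hx
    have := Multiset.le_sum_of_mem hx
    rw [ρ.parts_sum] at this
    rw [Finset.mem_Icc]; omega)
  rw [ρ.parts_sum] at h
  have h' : (m : F) = ∑ i ∈ Finset.Icc 1 m, ((ρ.parts.count i : F) * i) := by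
    conv_lhs => rw [h]
    push_cast
    simp
  conv_lhs => rw [h']
  rw [Finset.sum_mul]
  apply Finset.sum_congr rfl
  intros; ring

theorem SS_zero (F : Type) [Field F] {A : Type} [CommRing A] [Algebra F A] (a : ℕ → A) :
    SS F a 0 = 1 := by
  unfold SS
  rw [Fintype.sum_unique]
  have : (default : Nat.Partition 0).parts = 0 := by
    exact Nat.Partition.partition_zero_parts _
  rw [this]
  simp [aut]

theorem smul_map_prod {F : Type} [Field F] {A : Type} [CommRing A] [Algebra F A] (c : ℕ → F) (a : ℕ → A) (s : Multiset ℕ) :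
    (s.map c).prod • (s.map a).prod = (s.map fun i => c i • a i).prod := by
  induction s using Multiset.induction with
  | empty => simp
  | cons x s ih => simp only [Multiset.map_cons, Multiset.prod_cons, ← ih, smul_mul_smul_comm]

theorem crea_eq {F : Type} [Field F] [CharZero F] (c : ℕ → F) (m : ℕ) :
    crea c (m : ℤ) = SS F (fun i => c i • pvar F i) m := by
  unfold crea SS
  rw [if_pos (by positivity)]
  show ∑ ρ : Nat.Partition m, _ = _
  apply Finset.sum_congr rfl
  intro ρ _
  rw [← smul_map_prod, ← mul_smul, pprod]
  congr 1
  rw [div_eq_mul_inv, mul_comm]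

theorem crea_neg {F : Type} [Field F] [CharZero F] (c : ℕ → F) (m : ℤ) (h : m < 0) :
    crea c m = 0 := by
  unfold crea; rw [if_neg (by omega)]

theorem crea_zero {F : Type} [Field F] [CharZero F] (c : ℕ → F) : crea c 0 = 1 := by
  have := crea_eq c 0
  rw [SS_zero] at this
  exact_mod_cast this

theorem crea_rec {F : Type} [Field F] [CharZero F] (c : ℕ → F) (m : ℕ) (N : ℕ) (hN : m ≤ N) :
    (m : F) • crea c m = ∑ i ∈ Finset.Icc 1 N, (i : F) • ((c i • pvar F i) * crea c (m - i : ℤ)) := by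
  rw [crea_eq, SS_rec]
  have : Finset.Icc 1 m ⊆ Finset.Icc 1 N := Finset.Icc_subset_Icc_right hN
  rw [← Finset.sum_subset this]
  · apply Finset.sum_congr rfl
    intro i hi
    rw [Finset.mem_Icc] at hi
    rw [← crea_eq, Nat.cast_sub hi.2]
  · intro i hi hi'
    rw [Finset.mem_Icc] at hi hi'
    rw [crea_neg _ _ (by omega)]
    simp

theorem pder_crea {F : Type} [Field F] [CharZero F] (c : ℕ → F) (n : ℕ) (hn : Odd n) (m : ℕ) :
    pder n (crea c m) = c n • crea c (m - n : ℤ) := by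
  induction m using Nat.strong_induction_on with
  | _ m ih =>
  have hpos := hn.pos
  by_cases hm : m = 0
  · subst hm
    simp only [Nat.cast_zero]
    rw [crea_neg c (0 - (n : ℤ)) (by omega), crea_zero]
    simp [pder, hn]
  have hm0 : (m : F) ≠ 0 := by exact_mod_cast hm
  have key : (m : F) • pder n (crea c m) = (m : F) • (c n • crea c (m - n : ℤ)) := by
    have h1 : (m : F) • pder n (crea c m) = pder n ((m : F) • crea c m) := by
      simp [pder, hn]
    rw [h1, crea_rec c m (m + n) (by omega)]
    have hp : ∀ f : Gam F, pder n f = pderiv (⟨n, hn⟩ : OddIdx) f := by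
      intro f; simp [pder, hn]
    have ih' : ∀ i ∈ Finset.Icc 1 (m + n), pder n ((i : F) • ((c i • pvar F i) * crea c (m - i : ℤ)))
        = c n • ((i : F) • ((c i • pvar F i) * crea c ((m - n : ℤ) - i : ℤ)))
          + if i = n then ((n : F) * c n) • crea c (m - n : ℤ) else 0 := by
      intro i hi
      rw [Finset.mem_Icc] at hi
      have hd : pder n (crea c (m - i : ℤ)) = c n • crea c ((m - n : ℤ) - i : ℤ) := by
        by_cases him : i ≤ m
        · have := ih (m - i) (by omega)
          rw [Nat.cast_sub him] at this
          rw [this]; congr 2; ring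
        · rw [crea_neg c _ (by omega), crea_neg c _ (by omega)]
          simp [hp]
      have hd2 : pder n (pvar F i) = if i = n then 1 else 0 := by
        rw [hp]
        unfold pvar
        by_cases ho : Odd i
        · rw [dif_pos ho, pderiv_X]
          by_cases hin : i = n
          · subst hin; simp
          · rw [if_neg hin, Pi.single_eq_of_ne]
            simpa using hin
        · rw [dif_neg ho, if_neg]
          · simp
          · rintro rfl; exact ho hn
      rw [hp] at hd hd2 ⊢
      rw [Derivation.map_smul, Derivation.leibniz, Derivation.map_smul, hd, hd2]
      by_cases hin : i = n
      · subst hin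
        simp only [if_true, smul_eq_mul, Algebra.smul_def, map_mul]
        ring
      · simp only [if_neg hin, smul_eq_mul, Algebra.smul_def]
        ring
    have hps : pder n (∑ i ∈ Finset.Icc 1 (m+n), (i : F) • ((c i • pvar F i) * crea c (m - i : ℤ)))
       = ∑ i ∈ Finset.Icc 1 (m+n), pder n ((i : F) • ((c i • pvar F i) * crea c (m - i : ℤ))) := by
      simp only [hp, map_sum]
    rw [hps, Finset.sum_congr rfl ih', Finset.sum_add_distrib, ← Finset.smul_sum,
      Finset.sum_ite_eq' , if_pos (by rw [Finset.mem_Icc]; omega)]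
    by_cases hmn : n ≤ m
    · have := crea_rec c (m - n) (m + n) (by omega)
      rw [Nat.cast_sub (R := ℤ) hmn, Nat.cast_sub (R := F) hmn] at this
      rw [← this]
      simp only [Algebra.smul_def, map_mul, map_sub]
      ring
    · rw [crea_neg c (m - n : ℤ) (by omega)]
      rw [Finset.sum_eq_zero]
      · simp
      · intro i hi
        rw [crea_neg c _ (by omega)]; simp
  have := congrArg (fun f => (m : F)⁻¹ • f) key
  simpa [← mul_smul, hm0] using this

theorem pder_crea' {F : Type} [Field F] [CharZero F] (c : ℕ → F) (hc : ∀ n, ¬ Odd n → c n = 0) (n : ℕ) (m : ℤ) :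
    pder n (crea c m) = c n • crea c (m - n : ℤ) := by
  by_cases hn : Odd n
  · rcases lt_or_ge m 0 with h | h
    · rw [crea_neg c m h, crea_neg c _ (by omega)]; simp [pder]
    · lift m to ℕ using h
      exact pder_crea c n hn m
  · rw [hc n hn]; simp [pder, hn]

theorem constantCoeff_crea {F : Type} [Field F] [CharZero F] (c : ℕ → F) (m : ℤ) :
    constantCoeff (crea c m) = if m = 0 then 1 else 0 := by
  rcases lt_or_ge m 0 with h | h
  · rw [crea_neg c m h, if_neg (by omega)]; simp
  lift m to ℕ using h
  by_cases hm : m = 0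
  · subst hm; simp [crea_zero]
  have hm0 : (m : F) ≠ 0 := by exact_mod_cast hm
  have := congrArg constantCoeff (crea_rec c m m le_rfl)
  rw [map_sum, Finset.sum_eq_zero] at this
  · rw [if_neg (by exact_mod_cast hm)]
    simpa [smul_eq_C_mul, hm] using this
  · intro i _
    simp only [smul_eq_C_mul, map_mul]
    have : constantCoeff (pvar F i) = 0 := by
      unfold pvar; split_ifs <;> simp
    rw [this]; ring

theorem Dmult_crea {F : Type} [Field F] [CharZero F] (c : ℕ → F) (hc : ∀ n, ¬ Odd n → c n = 0)
    (l : List ℕ) (m : ℤ) :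
    l.foldr pder (crea c m) = (l.map c).prod • crea c (m - (l.sum : ℕ) : ℤ) := by
  induction l with
  | nil => simp
  | cons x l ih =>
    rw [List.foldr_cons, ih]
    have h : ∀ (a : F) (f : Gam F), pder x (a • f) = a • pder x f := by
      intro a f; unfold pder; split_ifs <;> simp
    rw [h, pder_crea' c hc, ← mul_smul, List.map_cons, List.prod_cons, List.sum_cons, mul_comm]
    congr 2
    push_cast; ring

theorem annih_crea {F : Type} [Field F] [CharZero F] (c d : ℕ → F) (hc : ∀ n, ¬ Odd n → c n = 0)
    (k : ℕ) (m : ℤ) :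
    annih d k (crea c m) = SS F (fun i => d i * c i) k • crea c (m - k : ℤ) := by
  unfold annih SS
  rw [Finset.sum_smul]
  apply Finset.sum_congr rfl
  intro ρ _
  have h1 : (ρ.parts.toList.map c).prod = (ρ.parts.map c).prod := by
    conv_rhs => rw [← Multiset.coe_toList ρ.parts]
    rw [Multiset.map_coe, Multiset.prod_coe]
  have h2 : ρ.parts.toList.sum = k := by
    rw [Multiset.sum_toList, ρ.parts_sum]
  rw [Dmult, Dmult_crea c hc, h1, h2, ← mul_smul, Multiset.prod_map_mul]
  congr 1
  rw [smul_eq_mul]; ring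

theorem cQ_even {F : Type} [Field F] (n : ℕ) (h : ¬ Odd n) : cQ F n = 0 := by
  unfold cQ; rw [if_neg h]

theorem coeff_crea_ne {F : Type} [Field F] [CharZero F] (r : ℕ) :
    coeff (Finsupp.single (⟨1, odd_one⟩ : OddIdx) r) (crea (cQ F) r) ≠ 0 := by
  induction r with
  | zero => simp [crea_zero]
  | succ r ih =>
    intro h
    have h1 := pder_crea (cQ F) 1 odd_one (r + 1)
    have h2 : pder 1 (crea (cQ F) ((r + 1 : ℕ) : ℤ)) = pderiv (⟨1, odd_one⟩ : OddIdx) (crea (cQ F) ((r + 1 : ℕ) : ℤ)) := by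
      simp [pder]
    rw [h2] at h1
    have h3 := congrArg (coeff (Finsupp.single (⟨1, odd_one⟩ : OddIdx) r)) h1
    rw [coeff_pderiv, ← Finsupp.single_add, h] at h3
    have h4 : (((r + 1 : ℕ) : ℤ) - ((1 : ℕ) : ℤ)) = (r : ℤ) := by push_cast; ring
    rw [h4, coeff_smul] at h3
    simp [cQ, ih] at h3

theorem bnd_crea {F : Type} [Field F] [CharZero F] (r : ℕ) : r < bnd (crea (cQ F) r) := by
  have h := le_totalDegree (mem_support_iff.2 (coeff_crea_ne (F := F) r))
  rw [Finsupp.sum_single_index rfl] at h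
  unfold bnd
  have : (crea (cQ F) (r : ℤ)).totalDegree + 1 ≤ ((crea (cQ F) (r : ℤ)).totalDegree + 1) * (((crea (cQ F) (r : ℤ)).vars.sup fun v => v.1) + 1) :=
    Nat.le_mul_of_pos_right _ (Nat.succ_pos _)
  omega

theorem vop_crea {F : Type} [Field F] [CharZero F] (d : ℕ → F) (k : ℤ) (r : ℕ) :
    vop (cQ F) d k (crea (cQ F) r) = ∑ j ∈ Finset.range (r + 1),
      SS F (fun i => d i * cQ F i) j • (crea (cQ F) (k + j) * crea (cQ F) (r - j : ℤ)) := by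
  unfold vop
  have hs : Finset.range (r + 1) ⊆ Finset.range (bnd (crea (cQ F) (r : ℤ))) := by
    intro x hx
    have := bnd_crea (F := F) r
    rw [Finset.mem_range] at *; omega
  rw [← Finset.sum_subset hs]
  · apply Finset.sum_congr rfl
    intro j _
    rw [annih_crea _ _ cQ_even, mul_smul_comm]
  · intro j _ hj
    rw [Finset.mem_range] at hj
    rw [annih_crea _ _ cQ_even, crea_neg _ (r - j : ℤ) (by omega)]
    simp

theorem Gelem_two (k r : ℕ) : Gelem [k, r] = ∑ j ∈ Finset.range (r + 1),
      SS FF (fun i => dG i * cQ FF i) j • (crea (cQ FF) (k + j : ℤ) * crea (cQ FF) (r - j : ℤ)) := by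
  have h1 : Gop (r : ℤ) 1 = crea (cQ FF) r := by
    have := vop_crea (F := FF) dG r 0
    rw [Nat.cast_zero, crea_zero] at this
    rw [Gop, this]
    simp [SS_zero, crea_zero]
  show Gop (k : ℤ) (Gop (r : ℤ) 1) = _
  rw [h1, Gop, vop_crea]

/-- weight in the form -/
def Wt (F : Type) [Field F] (m : OddIdx →₀ ℕ) : F :=
  (m.prod fun i k => (i.1 : F) ^ k * (Nat.factorial k : F)) / 2 ^ (m.sum fun _ k => k)

theorem formQ_eq {F : Type} [Field F] [CharZero F] (f g : Gam F) (s : Finset (OddIdx →₀ ℕ))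
    (h : f.support ⊆ s) : formQ f g = ∑ m ∈ s, f.coeff m * g.coeff m * Wt F m := by
  unfold formQ
  apply Finset.sum_subset h
  intro x _ hx
  rw [notMem_support_iff.1 hx]; ring

theorem formQ_add {F : Type} [Field F] [CharZero F] (f f' g : Gam F) :
    formQ (f + f') g = formQ f g + formQ f' g := by
  rw [formQ_eq f g (f.support ∪ f'.support) Finset.subset_union_left,
    formQ_eq f' g (f.support ∪ f'.support) Finset.subset_union_right,
    formQ_eq (f + f') g (f.support ∪ f'.support) support_add, ← Finset.sum_add_distrib]
  apply Finset.sum_congr rfl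
  intro x _
  rw [coeff_add]; ring

theorem formQ_smul {F : Type} [Field F] [CharZero F] (a : F) (f g : Gam F) :
    formQ (a • f) g = a * formQ f g := by
  rw [formQ_eq f g f.support subset_rfl,
    formQ_eq (a • f) g f.support support_smul, Finset.mul_sum]
  apply Finset.sum_congr rfl
  intro x _
  rw [coeff_smul, smul_eq_mul]; ring

theorem formQ_zero {F : Type} [Field F] [CharZero F] (g : Gam F) : formQ 0 g = 0 := by
  simp [formQ]

theorem formQ_sum {F : Type} [Field F] [CharZero F] {ι : Type} (s : Finset ι) (f : ι → Gam F) (g : Gam F) :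
    formQ (∑ i ∈ s, f i) g = ∑ i ∈ s, formQ (f i) g := by
  induction s using Finset.induction_on with
  | empty => simp [formQ_zero]
  | insert a s ha ih => rw [Finset.sum_insert ha, Finset.sum_insert ha, formQ_add, ih]

theorem formQ_monomial {F : Type} [Field F] [CharZero F] (s : OddIdx →₀ ℕ) (a : F) (g : Gam F) :
    formQ (monomial s a) g = a * g.coeff s * Wt F s := by
  rw [formQ_eq _ g {s} support_monomial_subset]
  simp

theorem Wt_add {F : Type} [Field F] [CharZero F] (u : OddIdx →₀ ℕ) (n : OddIdx) :
    Wt F (u + Finsupp.single n 1) = Wt F u * ((n.1 : F) / 2 * (u n + 1)) := by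
  unfold Wt
  have h1 : ((u + Finsupp.single n 1).sum fun _ k => k) = (u.sum fun _ k => k) + 1 := by
    rw [Finsupp.sum_add_index' (by simp) (by simp), Finsupp.sum_single_index rfl]
  have h0 : ∀ v : OddIdx →₀ ℕ, v.support ⊆ insert n u.support →
     (v.prod fun i k => (i.1 : F) ^ k * (Nat.factorial k : F)) = ∏ i ∈ insert n u.support, ((i.1 : F) ^ (v i) * (Nat.factorial (v i) : F)) := by
    intro v hv
    exact Finsupp.prod_of_support_subset v hv _ (by simp)
  have h2 : ((u + Finsupp.single n 1).prod fun i k => (i.1 : F) ^ k * (Nat.factorial k : F))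
      = (u.prod fun i k => (i.1 : F) ^ k * (Nat.factorial k : F)) * ((n.1 : F) * (u n + 1)) := by
    rw [h0 u (Finset.subset_insert _ _), h0 (u + Finsupp.single n 1),
     ← Finset.mul_prod_erase _ _ (Finset.mem_insert_self n u.support),
     ← Finset.mul_prod_erase _ (fun i => (i.1 : F) ^ (u i) * (Nat.factorial (u i) : F)) (Finset.mem_insert_self n u.support)]
    · have : ∏ x ∈ (insert n u.support).erase n, ((x.1 : F) ^ ((u + Finsupp.single n 1 : OddIdx →₀ ℕ) x) * (Nat.factorial ((u + Finsupp.single n 1 : OddIdx →₀ ℕ) x) : F))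
          = ∏ x ∈ (insert n u.support).erase n, ((x.1 : F) ^ (u x) * (Nat.factorial (u x) : F)) := by
        apply Finset.prod_congr rfl
        intro x hx
        have hx' := Finset.ne_of_mem_erase hx
        have : (u + Finsupp.single n 1 : OddIdx →₀ ℕ) x = u x := by
          rw [Finsupp.add_apply, Finsupp.single_eq_of_ne hx', add_zero]
        rw [this]
      rw [this]
      have : (u + Finsupp.single n 1 : OddIdx →₀ ℕ) n = u n + 1 := by simp
      rw [this, Nat.factorial_succ, pow_succ]
      push_cast; ring
    · intro x hx
      by_cases hxn : x = n
      · simp [hxn]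
      · rw [Finsupp.mem_support_iff, Finsupp.add_apply, Finsupp.single_eq_of_ne hxn, add_zero] at hx
        exact Finset.mem_insert_of_mem (Finsupp.mem_support_iff.2 hx)
  rw [h1, h2, pow_succ]
  field_simp

theorem formQ_X_mul {F : Type} [Field F] [CharZero F] (n : OddIdx) (f g : Gam F) :
    formQ f (X n * g) = ((n.1 : F) / 2) * formQ (pderiv n f) g := by
  induction f using MvPolynomial.induction_on' with
  | monomial s a =>
    rw [pderiv_monomial, formQ_monomial, formQ_monomial, coeff_X_mul']
    by_cases hn : n ∈ s.support
    · rw [if_pos hn]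
      have hs : s = (s - Finsupp.single n 1) + Finsupp.single n 1 := by
        rw [tsub_add_cancel_of_le]
        rw [Finsupp.single_le_iff]
        exact Nat.one_le_iff_ne_zero.2 (Finsupp.mem_support_iff.1 hn)
      generalize s - Finsupp.single n 1 = u at hs
      subst hs
      rw [Wt_add]
      simp
      ring
    · rw [if_neg hn]
      rw [Finsupp.notMem_support_iff.1 hn]
      simp
  | add p q hp hq =>
    rw [map_add, formQ_add, formQ_add, hp, hq]; ring

theorem formQ_one {F : Type} [Field F] [CharZero F] (f : Gam F) : formQ f 1 = constantCoeff f := by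
  induction f using MvPolynomial.induction_on' with
  | monomial s a =>
    rw [formQ_monomial, constantCoeff_monomial, coeff_one]
    by_cases h : s = 0
    · subst h; simp [Wt]
    · rw [if_neg (fun h' => h h'.symm), if_neg h]; ring
  | add p q hp hq => rw [map_add, formQ_add, hp, hq]

theorem Dpoly_eq (m : List ℕ) : Dpoly m = (m.map fun n => (1 + Polynomial.X ^ n : Polynomial ℚ)).prod := by
  have : (m.map fun n => (1 + Polynomial.X ^ n : Polynomial ℚ)).prod
      = ∏ j : Fin m.length, (1 + Polynomial.X ^ (m.get j)) := by
    conv_lhs => rw [← List.ofFn_get m]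
    rw [List.map_ofFn, List.prod_ofFn]
    rfl
  rw [this, Finset.prod_one_add, Finset.powerset_univ]
  unfold Dpoly
  apply Finset.sum_congr rfl
  intro S _
  rw [Finset.prod_pow_eq_pow_sum]

theorem Dpoly_coeff (m : List ℕ) (i : ℕ) : (Dpoly m).coeff i =
    ((Finset.univ.filter fun S : Finset (Fin m.length) => ∑ j ∈ S, m.get j = i).card : ℚ) := by
  unfold Dpoly
  rw [Polynomial.finsetSum_coeff]
  simp only [Polynomial.coeff_X_pow]
  rw [← Finset.sum_boole]
  apply Finset.sum_congr rfl
  intro S _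
  simp only [eq_comm]

theorem pairing {F : Type} [Field F] [CharZero F] (m : List ℕ) (hmo : ∀ x ∈ m, Odd x) (a b : ℤ)
    (hab : a + b = (m.sum : ℕ)) :
    formQ (crea (cQ F) a * crea (cQ F) b) (pprod F (m : Multiset ℕ)) =
      if 0 ≤ a then (((Dpoly m).coeff a.toNat : ℚ) : F) else 0 := by
  induction m generalizing a b with
  | nil =>
    have : pprod F ((([] : List ℕ)) : Multiset ℕ) = 1 := by simp [pprod]
    rw [this, formQ_one, map_mul, constantCoeff_crea, constantCoeff_crea, Dpoly_eq]
    simp only [List.sum_nil, Nat.cast_zero] at hab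
    simp only [List.map_nil, List.prod_nil, Polynomial.coeff_one]
    by_cases ha : a = 0
    · have : b = 0 := by omega
      subst ha this; simp
    · rw [if_neg ha]
      by_cases h0 : 0 ≤ a
      · rw [if_pos h0, if_neg (by omega)]
        have : ¬ a ≤ 0 := by omega
        simp [this]
      · rw [if_neg h0]; simp
  | cons n m ih =>
    have hn : Odd n := hmo n (by simp)
    have hpos := hn.pos
    have hm : ∀ x ∈ m, Odd x := fun x hx => hmo x (by simp [hx])
    have hp : pprod F ((n :: m : List ℕ) : Multiset ℕ) = X ⟨n, hn⟩ * pprod F (m : Multiset ℕ) := by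
      simp [pprod, pvar, hn]
    have hd : ∀ c : ℤ, pderiv (⟨n, hn⟩ : OddIdx) (crea (cQ F) c) = (2 / (n : F)) • crea (cQ F) (c - n) := by
      intro c
      have := pder_crea' (cQ F) cQ_even n c
      simpa [pder, hn, cQ] using this
    have hn0 : (n : F) ≠ 0 := by exact_mod_cast hpos.ne'
    rw [List.sum_cons] at hab
    push_cast at hab
    rw [hp, formQ_X_mul, pderiv_mul, formQ_add, hd, hd, smul_mul_assoc, mul_smul_comm,
      formQ_smul, formQ_smul, ih hm (a - n) b (by push_cast; omega), ih hm a (b - n) (by push_cast; omega)]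
    have hD : Dpoly (n :: m) = Dpoly m + Polynomial.X ^ n * Dpoly m := by
      rw [Dpoly_eq, Dpoly_eq, List.map_cons, List.prod_cons]; ring
    rw [hD, Polynomial.coeff_add, Polynomial.coeff_X_pow_mul']
    by_cases h0 : 0 ≤ a
    · rw [if_pos h0, if_pos h0]
      by_cases h1 : n ≤ a.toNat
      · rw [if_pos h1, if_pos (by omega)]
        have : (a - n).toNat = a.toNat - n := by omega
        rw [this]; push_cast; field_simp; ring
      · rw [if_neg h1, if_neg (by omega)]; push_cast; field_simp; ring
    · rw [if_neg h0, if_neg h0, if_neg (by omega)]; ring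

theorem geo {F : Type} [Field F] (x y : F) (h : x - y ≠ 0) (j : ℕ) :
    ∑ i ∈ Finset.range (j + 1), x ^ i * y ^ (j - i) = (x ^ (j + 1) - y ^ (j + 1)) / (x - y) := by
  rw [eq_div_iff h]
  exact geom_sum₂_mul x y (j + 1)

theorem geo_same {F : Type} [Field F] (x : F) (j : ℕ) :
    ∑ i ∈ Finset.range (j + 1), x ^ i * x ^ (j - i) = (j + 1) * x ^ j := by
  rw [Finset.sum_congr rfl (g := fun _ => x ^ j)]
  · simp
  · intro i hi
    rw [Finset.mem_range] at hi
    rw [← pow_add]; congr 1; omega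

theorem conv_id {F : Type} [Field F] [CharZero F] (t : F) (h0 : t ≠ 0) (h1 : t - 1 ≠ 0) (h2 : t + 1 ≠ 0) (j : ℕ) :
    (j : F) * (2 * (t - 1) / (t + 1) * (t ^ j - (-1) ^ j)) =
      ∑ i ∈ Finset.range (j + 1), ((1 - (-1) ^ i) * (t ^ i - 1)) *
        ((if j - i = 0 then 1 else 0) + 2 * (t - 1) / (t + 1) * (t ^ (j - i) - (-1) ^ (j - i))) := by
  have e : ∀ i ∈ Finset.range (j + 1), ((1 - (-1) ^ i) * (t ^ i - 1)) *
        ((if j - i = 0 then 1 else 0) + 2 * (t - 1) / (t + 1) * (t ^ (j - i) - (-1) ^ (j - i)))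
      = (if i = j then ((1 - (-1) ^ j) * (t ^ j - 1)) else 0) + 2 * (t - 1) / (t + 1) *
        ((t ^ i * t ^ (j - i) - 1 ^ i * t ^ (j - i) - (-t) ^ i * t ^ (j - i) + (-1) ^ i * t ^ (j - i))
        - (t ^ i * (-1) ^ (j - i) - 1 ^ i * (-1) ^ (j - i) - (-t) ^ i * (-1) ^ (j - i) + (-1) ^ i * (-1) ^ (j - i))) := by
    intro i hi
    rw [Finset.mem_range] at hi
    have hneg : (-t) ^ i = (-1) ^ i * t ^ i := by rw [← mul_pow]; ring
    rw [hneg, one_pow]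
    by_cases hij : i = j
    · subst hij; simp only [Nat.sub_self, if_true]; ring
    · rw [if_neg hij, if_neg (by omega)]; ring
  rw [Finset.sum_congr rfl e, Finset.sum_add_distrib, Finset.sum_ite_eq', if_pos (by simp), ← Finset.mul_sum]
  simp only [Finset.sum_sub_distrib, Finset.sum_add_distrib]
  have n1 : (1 : F) - t ≠ 0 := by intro h; apply h1; linear_combination -h
  have n2 : -t - t ≠ 0 := by
    intro h; apply h0
    have : (2 : F) * t = 0 := by linear_combination -h
    simpa using this
  have n3 : (-1 : F) - t ≠ 0 := by intro h; apply h2; linear_combination -h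
  have n4 : t - (-1) ≠ 0 := by simpa using h2
  have n5 : (1 : F) - (-1) ≠ 0 := by norm_num
  have n6 : -t - (-1) ≠ 0 := by intro h; apply h1; linear_combination -h
  rw [geo_same, geo_same, geo _ _ n1, geo _ _ n2, geo _ _ n3, geo _ _ n4, geo _ _ n5, geo _ _ n6]
  have hneg : (-t) ^ (j + 1) = (-1) ^ (j + 1) * t ^ (j + 1) := by rw [← mul_pow]; ring
  rw [hneg]
  have a1 : (1 : F) - t = -(t - 1) := by ring
  have a2 : -t - t = -(2 * t) := by ring
  have a3 : (-1 : F) - t = -(t + 1) := by ring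
  have a4 : t - (-1) = t + 1 := by ring
  have a5 : (1 : F) - (-1) = 2 := by ring
  have a6 : -t - (-1) = -(t - 1) := by ring
  rw [a1, a2, a3, a4, a5, a6]
  simp only [one_pow, pow_succ]
  generalize (-1 : F) ^ j = s
  generalize t ^ j = T
  field_simp
  ring

theorem fcoef {F : Type} [Field F] [CharZero F] (t : F) (h0 : t ≠ 0) (h1 : t - 1 ≠ 0) (h2 : t + 1 ≠ 0)
    (a : ℕ → F) (ha : ∀ i : ℕ, (i : F) * a i = (1 - (-1) ^ i) * (t ^ i - 1)) (j : ℕ) :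
    SS F a j = (if j = 0 then 1 else 0) + 2 * (t - 1) / (t + 1) * (t ^ j - (-1) ^ j) := by
  induction j using Nat.strong_induction_on with
  | _ j ih =>
  by_cases hj : j = 0
  · subst hj; simp [SS_zero]
  have hj0 : (j : F) ≠ 0 := by exact_mod_cast hj
  apply mul_left_cancel₀ hj0
  rw [if_neg hj, zero_add, conv_id t h0 h1 h2, ← smul_eq_mul, SS_rec]
  have hs : Finset.Icc 1 j ⊆ Finset.range (j + 1) := by
    intro x hx
    rw [Finset.mem_Icc] at hx
    rw [Finset.mem_range]; omega
  rw [← Finset.sum_subset hs]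
  · apply Finset.sum_congr rfl
    intro i hi
    rw [Finset.mem_Icc] at hi
    rw [ih (j - i) (by omega), smul_eq_mul, ← mul_assoc, ha]
  · intro i hi hi'
    rw [Finset.mem_range] at hi
    rw [Finset.mem_Icc] at hi'
    have : i = 0 := by omega
    subst this; simp

theorem plusPart_eq (k N : ℕ) (P : Polynomial ℚ) (h : P.natDegree < k + N) :
    plusPart k P = ∑ j ∈ Finset.range N, Polynomial.C (P.coeff (k + j)) * Polynomial.X ^ j := by
  unfold plusPart
  have hz : ∀ i, P.natDegree < i → P.coeff i = 0 := fun i hi => Polynomial.coeff_eq_zero_of_natDegree_lt hi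
  have hs : Finset.range (P.natDegree + 1) ⊆ Finset.range (k + N) := by
    intro x hx
    rw [Finset.mem_range] at *; omega
  rw [Finset.sum_subset hs, Finset.sum_range_add, Finset.sum_eq_zero, zero_add]
  · apply Finset.sum_congr rfl
    intro j _
    rw [if_pos (by omega), Nat.add_sub_cancel_left]
  · intro i hi
    rw [Finset.mem_range] at hi
    rw [if_neg (by omega)]
  · intro i _ hi
    rw [Finset.mem_range] at hi
    rw [hz i (by omega)]; simp

theorem Dpoly_natDegree (m : List ℕ) : (Dpoly m).natDegree ≤ m.sum := by
  rw [Dpoly_eq]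
  induction m with
  | nil => simp
  | cons n m ih =>
    rw [List.map_cons, List.prod_cons, List.sum_cons]
    refine Polynomial.natDegree_mul_le_of_le ?_ ih
    compute_degree

theorem tt_sub_ne (a : ℚ) : tt - (a : FF) ≠ 0 := by
  have h : tt - (a : FF) = algebraMap (Polynomial ℚ) FF (Polynomial.X - Polynomial.C a) := by
    rw [map_sub, RatFunc.algebraMap_X, RatFunc.algebraMap_C, tt]
    congr 1
    exact (map_ratCast (RatFunc.C : ℚ →+* FF) a).symm
  rw [h]
  intro h'
  exact Polynomial.X_sub_C_ne_zero a ((map_eq_zero_iff _ (RatFunc.algebraMap_injective ℚ)).1 h')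

theorem algC (a : ℚ) : algebraMap (Polynomial ℚ) FF (Polynomial.C a) = (a : FF) := by
  rw [RatFunc.algebraMap_C]
  exact (map_ratCast (RatFunc.C : ℚ →+* FF) a)

theorem Y_two_row (k r : ℕ) (h1 : r < k) (h2 : 0 < r) (m : List ℕ)
    (hmo : ∀ x ∈ m, Odd x) (hms : m.sum = k + r) :
    Ypoly [k, r] (↑m : Multiset ℕ)
      = (2 * (tt - 1) / (tt + 1)) *
          (algebraMap (Polynomial ℚ) FF (plusPart k (Dpoly m))
            - algebraMap (Polynomial ℚ) FF
                (Polynomial.C ((plusPart k (Dpoly m)).eval (-1))))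
        + ((Finset.univ.filter fun S : Finset (Fin m.length) =>
              ∑ j ∈ S, m.get j = r).card : FF) := by
  have hcoef : ∀ j, SS FF (fun i => dG i * cQ FF i) j =
      (if j = 0 then 1 else 0) + 2 * (tt - 1) / (tt + 1) * (tt ^ j - (-1) ^ j) := by
    apply fcoef
    · simpa using tt_sub_ne 0
    · simpa using tt_sub_ne 1
    · simpa using tt_sub_ne (-1)
    · intro i
      simp only [dG, cQ]
      by_cases hi : Odd i
      · have : (i : FF) ≠ 0 := by exact_mod_cast hi.pos.ne'
        rw [if_pos hi, if_pos hi, hi.neg_one_pow]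
        field_simp
        ring
      · rw [if_neg hi, (Nat.not_odd_iff_even.1 hi).neg_one_pow]; ring
  have hpair : ∀ j ∈ Finset.range (r + 1),
      formQ (SS FF (fun i => dG i * cQ FF i) j • (crea (cQ FF) (k + j : ℤ) * crea (cQ FF) (r - j : ℤ)))
        (pprod FF (↑m : Multiset ℕ))
      = (if j = 0 then (((Dpoly m).coeff (k + j) : ℚ) : FF) else 0) + 2 * (tt - 1) / (tt + 1) *
          ((((Dpoly m).coeff (k + j) : ℚ) : FF) * tt ^ j
            - (((Dpoly m).coeff (k + j) : ℚ) : FF) * (-1) ^ j) := by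
    intro j _
    rw [formQ_smul, hcoef, pairing m hmo _ _ (by rw [hms]; push_cast; ring), if_pos (show (0 : ℤ) ≤ (k : ℤ) + j by positivity)]
    have : ((k : ℤ) + j).toNat = k + j := by omega
    rw [this]
    split_ifs <;> ring
  have hsym : (((Dpoly m).coeff k : ℚ) : FF) = (((Dpoly m).coeff r : ℚ) : FF) := by
    have e1 := pairing (F := FF) m hmo k r (by rw [hms]; push_cast; ring)
    have e2 := pairing (F := FF) m hmo r k (by rw [hms]; push_cast; ring)
    rw [mul_comm, e2] at e1
    simpa using e1.symm
  rw [Ypoly, Gelem_two, formQ_sum, Finset.sum_congr rfl hpair, Finset.sum_add_distrib,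
    Finset.sum_ite_eq', if_pos (by simp), ← Finset.mul_sum, Finset.sum_sub_distrib, add_zero, hsym,
    plusPart_eq k (r + 1) (Dpoly m) (by have := Dpoly_natDegree m; omega), Dpoly_coeff m r, add_comm]
  have hX : algebraMap (Polynomial ℚ) FF Polynomial.X = tt := RatFunc.algebraMap_X
  congr 1
  · congr 1
    congr 1
    · simp only [map_sum, map_mul, map_pow, algC, hX]
    · rw [algC, Polynomial.eval_finsetSum]
      simp
  · push_cast
    rfl

end
end
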